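/- Let G be a group, k a natural number, and G₀ ≤ G a subgroup such that: (i) every finite subset of the k-th derived subgroup G^{(k)} is contained in some G-conjugate of G₀; and (ii) G contains an element g such that for all integers p ≠ q, every element of g^p G₀ g^{−p} commutes with every element of g^q G₀ g^{−q}. Then Hb^n(G, E) = 0 holds for all n ≥ 1 and all separable dual Banach G-modules E. -/

import Mathlib

open scoped BigOperators

/-- A cochain (function into a normed space) is bounded if its norms are uniformly bounded. -/
def IsBddCochain {G : Type*} {E : Type*} [NormedAddCommGroup E] {n : ℕ}
    (f : (Fin n → G) → E) : Prop :=
  ∃ C : ℝ, ∀ g, ‖f g‖ ≤ C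

/-- The inhomogeneous coboundary operator of bounded cohomology, for an action `π` of
`G` on `E`:
`(δf)(g₁,…,g_{n+1}) = g₁•f(g₂,…,g_{n+1}) + ∑_{i=1}^{n} (−1)^i f(g₁,…,g_i·g_{i+1},…,g_{n+1})`
`+ (−1)^{n+1} f(g₁,…,g_n)`. -/
def bddDelta {G : Type*} [Group G] {E : Type*} [NormedAddCommGroup E] [Module ℝ E]
    (π : G → E → E) (n : ℕ) (f : (Fin n → G) → E) : (Fin (n + 1) → G) → E :=
  fun g =>
    π (g 0) (f (fun j => g j.succ)) +
    (∑ i : Fin n, ((-1 : ℝ) ^ ((i : ℕ) + 1)) •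
      f (fun j => if (j : ℕ) < (i : ℕ) then g (Fin.castSucc j)
        else if (j : ℕ) = (i : ℕ) then g (Fin.castSucc j) * g j.succ
        else g j.succ)) +
    ((-1 : ℝ) ^ (n + 1)) • f (fun j => g (Fin.castSucc j))

/-- Vanishing of the bounded cohomology `Hb^n(G,E)` for all `n ≥ 1`, with respect to the
`G`-action `π` on `E`: every bounded cocycle of degree `n ≥ 1` is the coboundary of a
bounded cochain. -/
def HbVanish {G : Type*} [Group G] {E : Type*} [NormedAddCommGroup E] [Module ℝ E]
    (π : G → E → E) : Prop :=
  ∀ (n : ℕ) (f : (Fin (n + 1) → G) → E), IsBddCochain f →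
    bddDelta π (n + 1) f = 0 →
    ∃ b : (Fin n → G) → E, IsBddCochain b ∧ bddDelta π n b = f

/-- A group is boundedly acyclic if `Hb^n(G,ℝ) = 0` for all `n ≥ 1`, where `ℝ` carries
the trivial `G`-action. -/
def BoundedlyAcyclic (G : Type*) [Group G] : Prop :=
  HbVanish (G := G) (E := ℝ) (fun _ v => v)

/-- The contragredient action of `G` on the continuous dual of `F` induced by an
isometric action `ρ` of `G` on `F`: `(g • φ)(v) = φ (g⁻¹ • v)`. -/
def contragredient {G : Type*} [Group G] {F : Type*} [NormedAddCommGroup F]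
    [NormedSpace ℝ F] (ρ : G →* (F ≃ₗᵢ[ℝ] F)) : G → (F →L[ℝ] ℝ) → (F →L[ℝ] ℝ) :=
  fun g φ => φ.comp (ρ g⁻¹).toLinearIsometry.toContinuousLinearMap

/-! ### Means -/

namespace HbV

set_option linter.unusedVariables false
set_option linter.deprecated false

open Filter Topology

/-- Bounded real functions. -/
def Bd {I : Type*} (φ : I → ℝ) : Prop := ∃ C : ℝ, ∀ i, |φ i| ≤ C

/-- Limit of a real family along an ultrafilter. -/
noncomputable def ulim {J : Type*} (U : Ultrafilter J) (φ : J → ℝ) : ℝ := limUnder (U : Filter J) φ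

lemma ulim_tendsto {J : Type*} (U : Ultrafilter J) {φ : J → ℝ} (h : Bd φ) :
    Tendsto φ U (𝓝 (ulim U φ)) := by
  obtain ⟨C, hC⟩ := h
  have hc : IsCompact (Set.Icc (-C) C) := isCompact_Icc
  obtain ⟨x, -, hx⟩ := hc.ultrafilter_le_nhds' (U.map φ)
    (by
      rw [Ultrafilter.mem_map]
      exact Filter.univ_mem' (fun i => abs_le.mp (hC i)))
  exact tendsto_nhds_limUnder ⟨x, hx⟩

lemma ulim_eq {J : Type*} (U : Ultrafilter J) {φ : J → ℝ} {x : ℝ} (h : Tendsto φ U (𝓝 x)) :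
    ulim U φ = x := h.limUnder_eq

/-- A mean (finitely additive probability) on a set, as a functional on bounded functions. -/
structure Mean (I : Type*) where
  m : (I → ℝ) → ℝ
  add' : ∀ φ ψ, Bd φ → Bd ψ → m (fun i => φ i + ψ i) = m φ + m ψ
  smul' : ∀ (c : ℝ) φ, Bd φ → m (fun i => c * φ i) = c * m φ
  bound' : ∀ (C : ℝ) φ, (∀ i, |φ i| ≤ C) → |m φ| ≤ C
  const' : ∀ c : ℝ, m (fun _ => c) = c

/-- Limit of means along an ultrafilter. -/
noncomputable def Mean.lim {I J : Type*} (U : Ultrafilter J) (M : J → Mean I) : Mean I where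
  m φ := ulim U (fun j => (M j).m φ)
  add' φ ψ h1 h2 := by
    have b1 : Bd (fun j => (M j).m φ) := by
      obtain ⟨C, hC⟩ := h1; exact ⟨C, fun j => (M j).bound' C φ hC⟩
    have b2 : Bd (fun j => (M j).m ψ) := by
      obtain ⟨C, hC⟩ := h2; exact ⟨C, fun j => (M j).bound' C ψ hC⟩
    apply ulim_eq
    refine ((ulim_tendsto U b1).add (ulim_tendsto U b2)).congr ?_
    intro j; exact ((M j).add' φ ψ h1 h2).symm
  smul' c φ h1 := by
    have b1 : Bd (fun j => (M j).m φ) := by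
      obtain ⟨C, hC⟩ := h1; exact ⟨C, fun j => (M j).bound' C φ hC⟩
    apply ulim_eq
    refine ((ulim_tendsto U b1).const_mul c).congr ?_
    intro j; exact ((M j).smul' c φ h1).symm
  bound' C φ h := by
    have b : ∀ j, |(M j).m φ| ≤ C := fun j => (M j).bound' C φ h
    have := (ulim_tendsto U ⟨C, b⟩).abs
    exact le_of_tendsto this (Eventually.of_forall b)
  const' c := by
    apply ulim_eq
    refine tendsto_const_nhds.congr ?_
    intro j; exact ((M j).const' c).symm

lemma Mean.lim_tendsto {I J : Type*} (U : Ultrafilter J) (M : J → Mean I) {φ : I → ℝ}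
    (h : Bd φ) : Tendsto (fun j => (M j).m φ) U (𝓝 ((Mean.lim U M).m φ)) := by
  obtain ⟨C, hC⟩ := h
  exact ulim_tendsto U ⟨C, fun j => (M j).bound' C φ hC⟩

/-- Push-forward of a mean. -/
def Mean.map {I J : Type*} (g : I → J) (M : Mean I) : Mean J where
  m φ := M.m (fun i => φ (g i))
  add' φ ψ h1 h2 := M.add' _ _ (h1.imp fun _ h i => h _) (h2.imp fun _ h i => h _)
  smul' c φ h1 := M.smul' _ _ (h1.imp fun _ h i => h _)
  bound' C φ h := M.bound' _ _ (fun i => h _)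
  const' c := M.const' c

/-- Averages over `{0,…,n}`. -/
noncomputable def Mean.avg (n : ℕ) : Mean ℕ where
  m φ := (∑ i ∈ Finset.range (n + 1), φ i) / (n + 1)
  add' φ ψ _ _ := by rw [Finset.sum_add_distrib, add_div]
  smul' c φ _ := by rw [← Finset.mul_sum, mul_div_assoc]
  bound' C φ h := by
    rw [abs_div, abs_of_pos (by positivity : (0 : ℝ) < n + 1), div_le_iff₀ (by positivity)]
    refine (Finset.abs_sum_le_sum_abs _ _).trans ?_
    refine (Finset.sum_le_sum (fun i _ => h i)).trans ?_
    simp [mul_comm]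
  const' c := by
    simp; field_simp

/-- A shift invariant mean on `ℕ`. -/
noncomputable def cesaro : Mean ℕ := Mean.lim (hyperfilter ℕ) Mean.avg

lemma cesaro_shift {φ : ℕ → ℝ} (h : Bd φ) : cesaro.m (fun i => φ (i + 1)) = cesaro.m φ := by
  have h' : Bd (fun i => φ (i + 1)) := h.imp fun _ h i => h _
  have t1 := Mean.lim_tendsto (hyperfilter ℕ) Mean.avg h
  have t2 := Mean.lim_tendsto (hyperfilter ℕ) Mean.avg h'
  obtain ⟨C, hC⟩ := h
  have t3 : Tendsto (fun n : ℕ => (Mean.avg n).m (fun i => φ (i + 1)) - (Mean.avg n).m φ)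
      (hyperfilter ℕ) (𝓝 0) := by
    have key : Tendsto (fun n : ℕ => (Mean.avg n).m (fun i => φ (i + 1)) - (Mean.avg n).m φ)
        atTop (𝓝 0) := by
      have e : ∀ n : ℕ, (Mean.avg n).m (fun i => φ (i + 1)) - (Mean.avg n).m φ
          = (φ (n + 1) - φ 0) / ((n : ℝ) + 1) := by
        intro n
        simp only [Mean.avg]
        rw [← sub_div, ← Finset.sum_sub_distrib, Finset.sum_range_sub]
      have q : Tendsto (fun n : ℕ => (2 * C) * (1 / ((n : ℝ) + 1))) atTop (𝓝 0) := by
        simpa using (tendsto_one_div_add_atTop_nhds_zero_nat (𝕜 := ℝ)).const_mul (2 * C)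
      refine squeeze_zero_norm ?_ q
      intro n
      rw [e, Real.norm_eq_abs, abs_div, abs_of_pos (by positivity : (0 : ℝ) < n + 1), mul_one_div]
      gcongr
      have := abs_sub (φ (n + 1)) (φ 0)
      linarith [hC (n + 1), hC 0]
    exact key.mono_left (Nat.hyperfilter_le_atTop)
  have := tendsto_nhds_unique (t2.sub t1) t3
  exact sub_eq_zero.mp this

/-! ### Weak integrals -/

section wint

variable {F : Type*} [NormedAddCommGroup F] [NormedSpace ℝ F]

/-- Bounded families in the dual. -/
def BdE {I : Type*} {E : Type*} [NormedAddCommGroup E] (φ : I → E) : Prop := ∃ C : ℝ, ∀ i, ‖φ i‖ ≤ C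

lemma BdE.apply {I : Type*} {φ : I → (F →L[ℝ] ℝ)} (h : BdE φ) (v : F) : Bd (fun i => φ i v) := by
  obtain ⟨C, hC⟩ := h
  refine ⟨C * ‖v‖, fun i => ?_⟩
  exact (ContinuousLinearMap.le_opNorm (φ i) v).trans (by gcongr; exact hC i)

open Classical in
/-- Weak-* integral of a bounded family against a mean. -/
noncomputable def Mean.wint {I : Type*} (M : Mean I) (φ : I → (F →L[ℝ] ℝ)) : F →L[ℝ] ℝ :=
  if h : BdE φ then
    LinearMap.mkContinuous
      { toFun := fun v => M.m (fun i => φ i v)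
        map_add' := fun v w => by
          simp only [map_add]; exact M.add' _ _ (h.apply v) (h.apply w)
        map_smul' := fun c v => by
          simp only [map_smul, smul_eq_mul]; exact M.smul' _ _ (h.apply v) }
      h.choose (fun v => M.bound' _ _ (fun i =>
        (ContinuousLinearMap.le_opNorm (φ i) v).trans (by gcongr; exact h.choose_spec i)))
  else 0

lemma Mean.wint_apply {I : Type*} (M : Mean I) {φ : I → (F →L[ℝ] ℝ)} (h : BdE φ) (v : F) :
    M.wint φ v = M.m (fun i => φ i v) := by
  rw [Mean.wint, dif_pos h]; rfl

lemma Mean.wint_norm {I : Type*} (M : Mean I) {φ : I → (F →L[ℝ] ℝ)} {C : ℝ} (hC : 0 ≤ C)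
    (h : ∀ i, ‖φ i‖ ≤ C) : ‖M.wint φ‖ ≤ C := by
  refine ContinuousLinearMap.opNorm_le_bound _ hC (fun v => ?_)
  rw [M.wint_apply ⟨C, h⟩]
  exact M.bound' _ _ (fun i =>
        (ContinuousLinearMap.le_opNorm (φ i) v).trans (by gcongr; exact h i))

lemma Mean.wint_add {I : Type*} (M : Mean I) {φ ψ : I → (F →L[ℝ] ℝ)} (h : BdE φ) (h' : BdE ψ) :
    M.wint (fun i => φ i + ψ i) = M.wint φ + M.wint ψ := by
  have h2 : BdE (fun i => φ i + ψ i) := by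
    obtain ⟨C, hC⟩ := h; obtain ⟨C', hC'⟩ := h'
    exact ⟨C + C', fun i => norm_add_le_of_le (hC i) (hC' i)⟩
  ext v
  rw [M.wint_apply h2, ContinuousLinearMap.add_apply, M.wint_apply h, M.wint_apply h']
  exact M.add' _ _ (h.apply v) (h'.apply v)

lemma Mean.wint_comp {I : Type*} (M : Mean I) {φ : I → (F →L[ℝ] ℝ)} (h : BdE φ) (A : F →L[ℝ] F) :
    M.wint (fun i => (φ i).comp A) = (M.wint φ).comp A := by
  have h2 : BdE (fun i => (φ i).comp A) := by
    obtain ⟨C, hC⟩ := h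
    exact ⟨C * ‖A‖, fun i => (ContinuousLinearMap.opNorm_comp_le _ _).trans (by gcongr; exact hC i)⟩
  ext v
  rw [M.wint_apply h2, ContinuousLinearMap.comp_apply, M.wint_apply h]
  rfl

lemma BdE.neg {I : Type*} {φ : I → (F →L[ℝ] ℝ)} (h : BdE φ) : BdE (fun i => - φ i) := by
  obtain ⟨C, hC⟩ := h
  exact ⟨C, fun i => by rw [norm_neg]; exact hC i⟩

lemma BdE.sub {I : Type*} {φ ψ : I → (F →L[ℝ] ℝ)} (h : BdE φ) (h' : BdE ψ) :
    BdE (fun i => φ i - ψ i) := by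
  obtain ⟨C, hC⟩ := h; obtain ⟨C', hC'⟩ := h'
  exact ⟨C + C', fun i => norm_sub_le_of_le (hC i) (hC' i)⟩

lemma Mean.wint_neg {I : Type*} (M : Mean I) {φ : I → (F →L[ℝ] ℝ)} (h : BdE φ) :
    M.wint (fun i => - φ i) = - M.wint φ := by
  ext v
  rw [M.wint_apply h.neg, ContinuousLinearMap.neg_apply, M.wint_apply h]
  have := M.smul' (-1) _ (h.apply v)
  simpa using this

lemma Mean.wint_sub {I : Type*} (M : Mean I) {φ ψ : I → (F →L[ℝ] ℝ)} (h : BdE φ) (h' : BdE ψ) :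
    M.wint (fun i => φ i - ψ i) = M.wint φ - M.wint ψ := by
  simp only [sub_eq_add_neg]
  rw [M.wint_add h h'.neg, M.wint_neg h']

lemma Mean.wint_const {I : Type*} (M : Mean I) (e : F →L[ℝ] ℝ) :
    M.wint (fun _ => e) = e := by
  ext v
  rw [M.wint_apply ⟨‖e‖, fun _ => le_rfl⟩, M.const']

lemma cesaro_wint_shift {φ : ℕ → (F →L[ℝ] ℝ)} (h : BdE φ) :
    cesaro.wint (fun i => φ (i + 1)) = cesaro.wint φ := by
  ext v
  rw [Mean.wint_apply _ h, Mean.wint_apply _ (h.imp fun _ h i => h _), cesaro_shift (h.apply v)]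

end wint

/-! ### Homogeneous cochains on lists -/

section lists

variable {X Y E : Type*} [AddCommGroup E]

/-- Homogeneous coboundary: alternating sum over omitted entries. -/
def dl : (List X → E) → List X → E
  | _, [] => 0
  | f, a :: l => f l - dl (fun l' => f (a :: l')) l

/-- The prism operator. -/
def prism : (List X → E) → List (X × X) → E
  | _, [] => 0
  | f, p :: l => f (p.1 :: p.2 :: l.map Prod.snd) - prism (fun l' => f (p.1 :: l')) l

lemma dl_sub (f g : List X → E) (l : List X) :
    dl (fun l => f l - g l) l = dl f l - dl g l := by
  induction l generalizing f g with
  | nil => simp [dl]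
  | cons a l ih => simp only [dl, ih]; abel

lemma dl_add (f g : List X → E) (l : List X) :
    dl (fun l => f l + g l) l = dl f l + dl g l := by
  induction l generalizing f g with
  | nil => simp [dl]
  | cons a l ih => simp only [dl, ih]; abel

lemma dl_neg (f : List X → E) (l : List X) :
    dl (fun l => - f l) l = - dl f l := by
  induction l generalizing f with
  | nil => simp [dl]
  | cons a l ih => simp only [dl, ih]; abel

lemma dl_zero (l : List X) : dl (fun _ => (0 : E)) l = 0 := by
  induction l with
  | nil => simp [dl]
  | cons a l ih => simp only [dl, ih]; abel

lemma dl_dl (f : List X → E) (l : List X) : dl (dl f) l = 0 := by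
  induction l generalizing f with
  | nil => simp [dl]
  | cons a l ih => simp only [dl, dl_sub, ih]; abel

lemma dl_map (f : List Y → E) (h : X → Y) (l : List X) :
    dl f (l.map h) = dl (fun l' => f (l'.map h)) l := by
  induction l generalizing f with
  | nil => simp [dl]
  | cons a l ih => simp only [List.map_cons, dl, ih]

lemma dl_hom {E' : Type*} [AddCommGroup E'] (A : E →+ E') (f : List X → E) (l : List X) :
    dl (fun l' => A (f l')) l = A (dl f l) := by
  induction l generalizing f with
  | nil => simp [dl]
  | cons a l ih => simp only [dl, ih, map_sub]

lemma dl_congr {f g : List X → E} (n : ℕ) (h : ∀ l : List X, l.length = n → f l = g l)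
    (l : List X) (hl : l.length = n + 1) : dl f l = dl g l := by
  induction l generalizing f g n with
  | nil => simp [dl]
  | cons a l ih =>
    simp only [List.length_cons, add_left_inj] at hl
    simp only [dl]
    rw [h l hl]
    cases n with
    | zero =>
      rw [List.length_eq_zero_iff] at hl
      subst hl
      simp [dl]
    | succ n =>
      rw [ih n (f := fun l' => f (a :: l')) (g := fun l' => g (a :: l')) (fun l' hl' => h _ (by simp [hl'])) hl]

lemma dl_congr_sublist {f : List X → E} {g : List Y → E} (h : X → Y) (l : List X)
    (H : ∀ l' : List X, l'.Sublist l → f l' = g (l'.map h)) :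
    dl f l = dl g (l.map h) := by
  induction l generalizing f g with
  | nil => simp [dl]
  | cons a l ih =>
    simp only [dl, List.map_cons]
    rw [H l (List.sublist_cons_self a l)]
    rw [ih (f := fun l' => f (a :: l')) (g := fun l' => g (h a :: l'))
      (fun l' hl' => by simpa using H (a :: l') (hl'.cons_cons a))]

lemma dl_const (c : E) (l : List X) :
    dl (fun _ => c) l = if Even l.length then 0 else c := by
  induction l with
  | nil => simp [dl]
  | cons a l ih =>
    simp only [dl, ih, List.length_cons]
    by_cases h : Even l.length
    · have : ¬ Even (l.length + 1) := by rw [Nat.even_add_one]; simpa using h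
      simp [h, this]
    · have : Even (l.length + 1) := by rw [Nat.even_add_one]; exact h
      simp [h, this]

lemma prism_sub (f g : List X → E) (l : List (X × X)) :
    prism (fun l => f l - g l) l = prism f l - prism g l := by
  induction l generalizing f g with
  | nil => simp [prism]
  | cons a l ih => simp only [prism, ih]; abel

lemma prism_zero (l : List (X × X)) : prism (fun _ => (0 : E)) l = 0 := by
  induction l with
  | nil => simp [prism]
  | cons a l ih => simp only [prism, ih]; abel

lemma prism_hom {E' : Type*} [AddCommGroup E'] (A : E →+ E') (f : List X → E) (l : List (X × X)) :
    prism (fun l' => A (f l')) l = A (prism f l) := by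
  induction l generalizing f with
  | nil => simp [prism]
  | cons a l ih => simp only [prism, ih, map_sub]

lemma prism_map (f : List Y → E) (h : X → Y) (l : List (X × X)) :
    prism f (l.map (Prod.map h h)) = prism (fun l' => f (l'.map h)) l := by
  induction l generalizing f with
  | nil => simp [prism]
  | cons a l ih =>
    simp only [List.map_cons, prism, ih, Prod.map_fst, Prod.map_snd, List.map_map]
    rfl

lemma prism_identity (f : List X → E) (l : List (X × X)) :
    dl (prism f) l + prism (dl f) l = f (l.map Prod.snd) - f (l.map Prod.fst) := by
  induction l generalizing f with
  | nil => simp [dl, prism]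
  | cons p l ih =>
    have h := ih (fun l' => f (p.1 :: l'))
    simp only [dl, prism, List.map_cons, prism_sub, dl_sub]
    rw [dl_map (fun l' => f (p.1 :: p.2 :: l')) Prod.snd l]
    have h' : prism (dl (fun l' => f (p.1 :: l'))) l =
      f (p.1 :: l.map Prod.snd) - f (p.1 :: l.map Prod.fst) - dl (prism fun l' ↦ f (p.1 :: l')) l := by
      rw [← h]; abel
    have h'' : prism (fun l' => dl (fun l'' => f (p.1 :: l'')) l') l =
      prism (dl (fun l' => f (p.1 :: l'))) l := rfl
    rw [h'', h']
    abel

end lists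

section lists2

variable {X Y E : Type*} [NormedAddCommGroup E]

lemma dl_bound {f : List X → E} {C : ℝ} (h : ∀ l, ‖f l‖ ≤ C) (l : List X) :
    ‖dl f l‖ ≤ l.length * C := by
  induction l generalizing f with
  | nil => simp [dl]
  | cons a l ih =>
    simp only [dl]
    refine (norm_sub_le_of_le (h l) (ih (f := fun l' => f (a :: l')) (fun l' => h _))).trans ?_
    push_cast [List.length_cons]
    linarith

lemma prism_bound {f : List X → E} {C : ℝ} (h : ∀ l, ‖f l‖ ≤ C) (l : List (X × X)) :
    ‖prism f l‖ ≤ l.length * C := by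
  induction l generalizing f with
  | nil => simp [prism]
  | cons a l ih =>
    simp only [prism]
    refine (norm_sub_le_of_le (h _) (ih (f := fun l' => f (a.1 :: l')) (fun l' => h _))).trans ?_
    push_cast [List.length_cons]
    linarith

end lists2

lemma dl_wint {F : Type*} [NormedAddCommGroup F] [NormedSpace ℝ F] {I X : Type*} (M : Mean I)
    (φ : I → List X → (F →L[ℝ] ℝ)) (l : List X)
    (hφ : ∃ C : ℝ, ∀ i l', l'.length ≤ l.length → ‖φ i l'‖ ≤ C) :
    BdE (fun i => dl (φ i) l) ∧
    dl (fun l' => M.wint (fun i => φ i l')) l = M.wint (fun i => dl (φ i) l) := by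
  obtain ⟨C, hφ⟩ := hφ
  induction l generalizing φ with
  | nil => exact ⟨⟨0, fun i => by simp [dl]⟩, by simp [dl, M.wint_const]⟩
  | cons a l ih =>
    obtain ⟨h1, h2⟩ := ih (fun i l' => φ i (a :: l')) (fun i l' hl' => hφ i _ (by simp [hl']))
    have h3 : BdE (fun i => φ i l) := ⟨C, fun i => hφ i l (by simp)⟩
    refine ⟨h3.sub h1, ?_⟩
    simp only [dl]
    rw [h2, M.wint_sub h3 h1]

/-! ### The action -/

section action

variable {G : Type*} [Group G] {F : Type*} [NormedAddCommGroup F] [NormedSpace ℝ F]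
  (ρ : G →* (F ≃ₗᵢ[ℝ] F))

lemma con_apply (g : G) (φ : F →L[ℝ] ℝ) (v : F) : contragredient ρ g φ v = φ (ρ g⁻¹ v) := rfl

/-- The action as an additive map. -/
def conHom (g : G) : (F →L[ℝ] ℝ) →+ (F →L[ℝ] ℝ) where
  toFun := contragredient ρ g
  map_zero' := by ext v; simp [con_apply]
  map_add' φ ψ := by ext v; simp [con_apply]

lemma conHom_apply (g : G) (φ : F →L[ℝ] ℝ) : conHom ρ g φ = contragredient ρ g φ := rfl

lemma con_one (φ : F →L[ℝ] ℝ) : contragredient ρ 1 φ = φ := by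
  ext v; simp [con_apply]

lemma con_mul (g h : G) (φ : F →L[ℝ] ℝ) :
    contragredient ρ (g * h) φ = contragredient ρ g (contragredient ρ h φ) := by
  ext v; simp [con_apply]

lemma con_norm_le (g : G) (φ : F →L[ℝ] ℝ) : ‖contragredient ρ g φ‖ ≤ ‖φ‖ := by
  refine ContinuousLinearMap.opNorm_le_bound _ (norm_nonneg _) (fun v => ?_)
  rw [con_apply]
  refine (ContinuousLinearMap.le_opNorm _ _).trans ?_
  rw [LinearIsometryEquiv.norm_map]

lemma con_norm (g : G) (φ : F →L[ℝ] ℝ) : ‖contragredient ρ g φ‖ = ‖φ‖ := by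
  refine le_antisymm (con_norm_le ρ g φ) ?_
  have := con_norm_le ρ g⁻¹ (contragredient ρ g φ)
  rwa [← con_mul, inv_mul_cancel, con_one] at this

lemma con_wint {I : Type*} (M : Mean I) {φ : I → (F →L[ℝ] ℝ)} (h : BdE φ) (g : G) :
    M.wint (fun i => contragredient ρ g (φ i)) = contragredient ρ g (M.wint φ) :=
  M.wint_comp h _

/-- Equivariance of a homogeneous cochain under a set. -/
def Equiv' (D : Set G) (f : List G → (F →L[ℝ] ℝ)) : Prop :=
  ∀ d ∈ D, ∀ l, f (l.map (d * ·)) = contragredient ρ d (f l)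

lemma exists_perm_of_nodup {N : ℕ} {X : Type*} (L : List (X × Fin N)) (h : (L.map Prod.snd).Nodup) :
    ∃ σ : Equiv.Perm (Fin N),
      L = ((L.map Prod.fst).zip (List.finRange N)).map (fun p => (p.1, σ p.2)) := by
  classical
  have hlen : L.length ≤ N := by
    have := h.length_le_card
    simpa using this
  let s : Finset (Fin N) := Finset.univ.filter (fun i => i.1 < L.length)
  let f : Fin N → Fin N := fun i => if hi : i.1 < L.length then (L[i.1]).2 else i
  have hinj : Set.InjOn f s := by
    intro i hi j hj hij
    have hi' : i.1 < L.length := by simpa [s] using hi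
    have hj' : j.1 < L.length := by simpa [s] using hj
    simp only [f, hi', hj', dif_pos] at hij
    have := (List.Nodup.getElem_inj_iff h (i := i.1) (j := j.1) (hi := by simpa) (hj := by simpa)).mp (by simpa using hij)
    exact Fin.ext this
  obtain ⟨g, hg⟩ := Finset.exists_equiv_extend_of_card_eq (α := Fin N) (t := (Finset.univ : Finset (Fin N)))
    (by simp) (s := s) (f := f) (by simp) hinj
  let σ : Equiv.Perm (Fin N) := g.trans (Equiv.subtypeUnivEquiv (by simp))
  refine ⟨σ, ?_⟩
  apply List.ext_getElem
  · simp [hlen]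
  · intro i h1 h2
    have h3 : i < N := by omega
    have h4 : σ ⟨i, h3⟩ = L[i].2 := by
      have := hg ⟨i, h3⟩ (by simp [s, h1])
      simp only [σ, Equiv.trans_apply, Equiv.subtypeUnivEquiv_apply, this]
      simp [f, h1]
    simp [h4]

lemma exists_beta (D : Subgroup G) : ∃ β : G → G, (∀ x, β x ∈ D) ∧ ∀ d ∈ D, ∀ x, β (d * x) = d * β x := by
  let r : G → G := fun x => Quotient.out (Quotient.mk (QuotientGroup.rightRel D) x)
  refine ⟨fun x => x * (r x)⁻¹, fun x => ?_, fun d hd x => ?_⟩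
  · have : (QuotientGroup.rightRel D) (r x) x := Quotient.mk_out (s := QuotientGroup.rightRel D) x
    rw [QuotientGroup.rightRel_apply] at this
    exact this
  · have : r (d * x) = r x := by
      simp only [r]
      congr 1
      apply Quotient.sound (s := QuotientGroup.rightRel D)
      change (QuotientGroup.rightRel D) _ _
      rw [QuotientGroup.rightRel_apply]
      simpa [mul_assoc] using hd
    simp only [this, mul_assoc]

lemma exists_primitive (D : Subgroup G) (N : ℕ) (hN : 2 ≤ N) (f : List G → (F →L[ℝ] ℝ)) (hfb : BdE f)
    (hd : ∀ l, dl f l = 0) (heq : Equiv' ρ Set.univ f)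
    (M : Mean (Fin N → G))
    (hperm : ∀ (σ : Equiv.Perm (Fin N)) (φ : (Fin N → G) → ℝ), Bd φ →
      M.m (fun y => φ (y ∘ σ)) = M.m φ)
    (hM : ∀ γ : Fin N → G, (∀ i, γ i ∈ D) →
      M.wint (fun y => f (List.ofFn (fun i => γ i * y i))) = M.wint (fun y => f (List.ofFn y))) :
    ∃ B : List G → (F →L[ℝ] ℝ), BdE B ∧ Equiv' ρ D B ∧ ∀ l, l.length = N → dl B l = f l := by
  obtain ⟨β, hβ, hβ'⟩ := exists_beta D
  obtain ⟨C, hC⟩ := hfb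
  have hC0 : 0 ≤ C := (norm_nonneg _).trans (hC [])
  let pr : (Fin N → G) → (G × Fin N) → G × G := fun y p => (p.1, β p.1 * y p.2)
  let Ψ : List (G × Fin N) → (F →L[ℝ] ℝ) := fun L => M.wint (fun y => prism f (L.map (pr y)))
  let lab : List G → List (G × Fin N) := fun l => l.zip (List.finRange N)
  have hlab : ∀ l, (lab l).length ≤ N := by intro l; simp [lab]
  have hpb : ∀ (L : List (G × Fin N)) y, ‖prism f (L.map (pr y))‖ ≤ L.length * C := by
    intro L y
    simpa using prism_bound hC (L.map (pr y))
  let B : List G → (F →L[ℝ] ℝ) := fun l => Ψ (lab l)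
  have hBb : ∀ l, ‖B l‖ ≤ N * C := by
    intro l
    apply Mean.wint_norm _ (by positivity)
    intro y
    refine (hpb _ y).trans ?_
    gcongr
    exact hlab l
  -- equivariance of B
  have hBe : Equiv' ρ D B := by
    intro d hdD l
    simp only [B, Ψ]
    rw [← con_wint ρ M ⟨_, hpb (lab l)⟩]
    congr 1
    ext1 y
    have e1 : (lab (l.map (d * ·))).map (pr y) = ((lab l).map (pr y)).map (Prod.map (d * ·) (d * ·)) := by
      simp only [lab, List.map_map]
      rw [List.zip_map_left]
      rw [List.map_map]
      apply List.map_congr_left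
      intro p _
      simp [pr, hβ' d hdD, mul_assoc]
    rw [e1, prism_map, ← conHom_apply, ← prism_hom]
    congr 1
    ext1 l'
    exact heq d (Set.mem_univ _) l'
  have hΨB : ∀ L : List (G × Fin N), (L.map Prod.snd).Nodup → Ψ L = B (L.map Prod.fst) := by
    intro L hL
    obtain ⟨σ, hσ⟩ := exists_perm_of_nodup L hL
    simp only [B, Ψ]
    ext v
    rw [M.wint_apply ⟨_, hpb L⟩, M.wint_apply ⟨_, hpb _⟩]
    rw [← hperm σ _ (BdE.apply ⟨_, hpb (lab (L.map Prod.fst))⟩ v)]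
    congr 1
    ext1 y
    congr 2
    conv_lhs => rw [hσ]
    rw [List.map_map]
    rfl
  let c := M.wint (fun y => f (List.ofFn y))
  have hdB : ∀ l : List G, l.length = N → dl B l = c - f l := by
    intro l hl
    have e0 : (lab l).map Prod.fst = l := by
      simp only [lab]
      rw [List.map_fst_zip]
      simp [hl]
    have e1 : (lab l).map Prod.snd = List.finRange N := by
      simp only [lab]
      rw [List.map_snd_zip]
      simp [hl]
    have e2 : dl Ψ (lab l) = dl B l := by
      conv_rhs => rw [← e0]
      apply dl_congr_sublist
      intro L' hL'
      apply hΨB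
      have := hL'.map Prod.snd
      rw [e1] at this
      exact this.nodup (List.nodup_finRange N)
    rw [← e2]
    obtain ⟨-, h2⟩ := dl_wint M (fun y L => prism f (L.map (pr y))) (lab l)
      ⟨N * C, fun y L hL => (hpb L y).trans (by gcongr; exact hL.trans (hlab l))⟩
    refine h2.trans ?_
    have e3 : ∀ y, dl (fun L : List (G × Fin N) => prism f (L.map (pr y))) (lab l)
        = f (List.ofFn (fun i : Fin N => β (l[i.1]) * y i)) - f l := by
      intro y
      rw [← dl_map]
      have := prism_identity f ((lab l).map (pr y))
      have h0 : prism (dl f) ((lab l).map (pr y)) = 0 := by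
        have : dl f = fun _ => 0 := funext hd
        rw [this, prism_zero]
      rw [h0, add_zero] at this
      rw [this]
      have a1 : ((lab l).map (pr y)).map Prod.fst = l := by
        rw [List.map_map]
        exact e0
      have a2 : ((lab l).map (pr y)).map Prod.snd = List.ofFn (fun i : Fin N => β (l[i.1]) * y i) := by
        apply List.ext_getElem
        · simp [lab, hl]
        · intro i h1 h2
          simp [lab, pr]
      rw [a1, a2]
    simp only [e3]
    rw [M.wint_sub ⟨C, fun y => hC _⟩ ⟨C, fun y => hC _⟩, M.wint_const,
      hM (fun i : Fin N => β (l[i.1])) (fun i => hβ _)]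
  have hcD : ∀ d ∈ D, contragredient ρ d c = c := by
    intro d hdD
    rw [← con_wint ρ M ⟨C, fun y => hC _⟩]
    refine Eq.trans ?_ (hM (fun _ => d) (fun _ => hdD))
    congr 1
    ext1 y
    rw [← heq d (Set.mem_univ _), List.map_ofFn]
    rfl
  rcases Nat.even_or_odd N with hev | hodd
  · -- c = 0
    have hc : c = 0 := by
      let l : List G := List.replicate (N + 1) 1
      have hl : l.length = N + 1 := by simp [l]
      have h1 := dl_congr (f := dl B) (g := fun l => c - f l) N hdB l hl
      rw [dl_dl, dl_sub, hd, sub_zero, dl_const, if_neg (by rw [hl, Nat.even_add_one]; simpa using hev)] at h1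
      exact h1.symm
    refine ⟨fun l => - B l, ⟨_, fun l => by rw [norm_neg]; exact hBb l⟩, fun d hdD l => ?_, fun l hl => ?_⟩
    · rw [← conHom_apply, map_neg, conHom_apply, ← hBe d hdD]
    · rw [dl_neg, hdB l hl, hc]; abel
  · refine ⟨fun l => c - B l, BdE.sub ⟨‖c‖, fun _ => le_rfl⟩ ⟨_, hBb⟩, fun d hdD l => ?_, fun l hl => ?_⟩
    · rw [← conHom_apply, map_sub, conHom_apply, conHom_apply, ← hBe d hdD, hcD d hdD]
    · rw [dl_sub, hdB l hl, dl_const, if_neg (by rw [hl]; exact Nat.not_even_iff_odd.mpr hodd)]; abel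

/-! ### Averaging over solvable quotients -/

/-- Dirac mean. -/
def Mean.dirac {I : Type*} (j : I) : Mean I where
  m φ := φ j
  add' _ _ _ _ := rfl
  smul' _ _ _ := rfl
  bound' _ _ h := h j
  const' _ := rfl

/-- The mean of an ultrafilter. -/
noncomputable def Mean.ultra {J : Type*} (U : Ultrafilter J) : Mean J := Mean.lim U Mean.dirac

lemma Mean.ultra_congr {J : Type*} (U : Ultrafilter J) {φ ψ : J → (F →L[ℝ] ℝ)} (h : BdE φ) (h' : BdE ψ)
    (he : ∀ᶠ j in (U : Filter J), φ j = ψ j) : (Mean.ultra U).wint φ = (Mean.ultra U).wint ψ := by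
  ext v
  rw [Mean.wint_apply _ h, Mean.wint_apply _ h']
  have t1 := Mean.lim_tendsto U Mean.dirac (h.apply v)
  have t2 := Mean.lim_tendsto U Mean.dirac (h'.apply v)
  refine tendsto_nhds_unique t1 (t2.congr' ?_)
  filter_upwards [he] with j hj
  simp [Mean.dirac, hj]

/-- The convex set of admissible primitives. -/
def Adm (f : List G → (F →L[ℝ] ℝ)) (N : ℕ) (C : ℝ) (B : List G → (F →L[ℝ] ℝ)) : Prop :=
  (∀ l, ‖B l‖ ≤ C) ∧ ∀ l, l.length = N → dl B l = f l

lemma adm_step {f : List G → (F →L[ℝ] ℝ)} (heq : Equiv' ρ Set.univ f) {N : ℕ} {C : ℝ} (hC : 0 ≤ C)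
    {H : Subgroup G} {T : Set G} (hT : T ⊆ H) {a : G} (ha : a ∈ H) {B : List G → (F →L[ℝ] ℝ)}
    (hB : Adm f N C B) (hc : Equiv' ρ (⁅H, H⁆ : Subgroup G) B) (ht : Equiv' ρ T B) :
    ∃ B', Adm f N C B' ∧ Equiv' ρ (⁅H, H⁆ : Subgroup G) B' ∧ Equiv' ρ (insert a T) B' := by
  let φ : ℕ → List G → (F →L[ℝ] ℝ) := fun i l =>
    contragredient ρ (a ^ i) (B (l.map ((a ^ i)⁻¹ * ·)))
  have hφ : ∀ i l, ‖φ i l‖ ≤ C := fun i l => by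
    simp only [φ]; rw [con_norm]; exact hB.1 _
  have hφB : ∀ l, BdE (fun i => φ i l) := fun l => ⟨C, fun i => hφ i l⟩
  have hs : ∀ s ∈ H, (∀ l, B (l.map (s * ·)) = contragredient ρ s (B l)) →
      ∀ l, cesaro.wint (fun i => φ i (l.map (s * ·))) =
        contragredient ρ s (cesaro.wint (fun i => φ i l)) := by
    intro s hsH hs l
    rw [← con_wint ρ cesaro (hφB l)]
    congr 1
    ext1 i
    simp only [φ]
    have hcm : (a ^ i)⁻¹ * s * a ^ i * s⁻¹ ∈ ⁅H, H⁆ := by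
      have := Subgroup.commutator_mem_commutator (H₁ := H) (H₂ := H)
        (H.inv_mem (H.pow_mem ha i)) hsH
      rw [commutatorElement_def, inv_inv] at this
      exact this
    have e1 : (l.map (s * ·)).map ((a ^ i)⁻¹ * ·) =
        ((l.map ((a ^ i)⁻¹ * ·)).map (s * ·)).map (((a ^ i)⁻¹ * s * a ^ i * s⁻¹) * ·) := by
      simp only [List.map_map]
      apply List.map_congr_left
      intro x _
      simp [mul_assoc]
    rw [e1, hc _ hcm, hs, ← con_mul, ← con_mul, ← con_mul]
    congr 1
    group
  refine ⟨fun l => cesaro.wint (fun i => φ i l), ⟨fun l => Mean.wint_norm _ hC (fun i => hφ i l), ?_⟩, ?_, ?_⟩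
  · intro l hl
    obtain ⟨-, h2⟩ := dl_wint cesaro φ l ⟨C, fun i l' _ => hφ i l'⟩
    rw [h2]
    have : ∀ i, dl (φ i) l = f l := by
      intro i
      have h3 : dl (φ i) l = conHom ρ (a ^ i) (dl (fun l' => B (l'.map ((a ^ i)⁻¹ * ·))) l) := by
        rw [← dl_hom]; rfl
      rw [h3, ← dl_map, hB.2 _ (by simpa using hl), conHom_apply, ← heq _ (Set.mem_univ _), List.map_map]
      congr 1
      conv_rhs => rw [← List.map_id l]
      apply List.map_congr_left
      intro x _
      simp
    simp only [this]
    rw [Mean.wint_const]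
  · intro d hd l
    exact hs d (Subgroup.commutator_le_self H hd) (hc d hd) l
  · intro d hd l
    rcases Set.mem_insert_iff.mp hd with rfl | hd
    · simp only
      rw [← con_wint ρ cesaro (hφB l), ← cesaro_wint_shift (hφB _)]
      congr 1
      ext1 i
      simp only [φ]
      rw [← con_mul, List.map_map]
      congr 2
      · rw [pow_succ']
      · apply List.map_congr_left
        intro x _
        simp [pow_succ', mul_assoc]
    · exact hs d (hT hd) (ht d hd) l

lemma adm_abelian {f : List G → (F →L[ℝ] ℝ)} (heq : Equiv' ρ Set.univ f) {N : ℕ} {C : ℝ} (hC : 0 ≤ C)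
    {H : Subgroup G} (h : ∃ B, Adm f N C B ∧ Equiv' ρ (⁅H, H⁆ : Subgroup G) B) :
    ∃ B, Adm f N C B ∧ Equiv' ρ H B := by
  classical
  have key : ∀ T : Finset H, ∃ B, Adm f N C B ∧ Equiv' ρ (⁅H, H⁆ : Subgroup G) B ∧
      Equiv' ρ ((fun x : H => (x : G)) '' (T : Set H)) B := by
    intro T
    induction T using Finset.induction_on with
    | empty =>
      obtain ⟨B, h1, h2⟩ := h
      exact ⟨B, h1, h2, fun d hd => by simp at hd⟩
    | insert a T _ ih =>
      obtain ⟨B, h1, h2, h3⟩ := ih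
      obtain ⟨B', h1', h2', h3'⟩ := adm_step ρ heq hC (T := (fun x : H => (x : G)) '' (T : Set H))
        (by rintro _ ⟨x, -, rfl⟩; exact x.2) a.2 h1 h2 h3
      refine ⟨B', h1', h2', ?_⟩
      rwa [Finset.coe_insert, Set.image_insert_eq]
  choose B hB1 hB2 hB3 using key
  let U : Ultrafilter (Finset H) := Ultrafilter.of atTop
  have hU : (U : Filter (Finset H)) ≤ atTop := Ultrafilter.of_le _
  have hb : ∀ l, BdE (fun T => B T l) := fun l => ⟨C, fun T => (hB1 T).1 l⟩
  refine ⟨fun l => (Mean.ultra U).wint (fun T => B T l),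
    ⟨fun l => Mean.wint_norm _ hC (fun T => (hB1 T).1 l), ?_⟩, ?_⟩
  · intro l hl
    obtain ⟨-, h2⟩ := dl_wint (Mean.ultra U) B l ⟨C, fun T l' _ => (hB1 T).1 l'⟩
    rw [h2]
    have : ∀ T, dl (B T) l = f l := fun T => (hB1 T).2 l hl
    simp only [this]
    rw [Mean.wint_const]
  · intro d hd l
    rw [← con_wint ρ _ (hb l)]
    refine Mean.ultra_congr U (hb _) ⟨C, fun T => by rw [con_norm]; exact (hB1 T).1 l⟩ ?_
    apply hU
    filter_upwards [eventually_ge_atTop {(⟨d, hd⟩ : H)}] with T hT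
    exact hB3 T d ⟨⟨d, hd⟩, by simpa using hT, rfl⟩ l

lemma adm_solvable {f : List G → (F →L[ℝ] ℝ)} (heq : Equiv' ρ Set.univ f) {N : ℕ} {C : ℝ} (hC : 0 ≤ C)
    (k : ℕ) (h : ∃ B, Adm f N C B ∧ Equiv' ρ (derivedSeries G k) B) :
    ∃ B, Adm f N C B ∧ Equiv' ρ Set.univ B := by
  induction k with
  | zero => simpa using h
  | succ k ih => exact ih (adm_abelian ρ heq hC (by simpa [derivedSeries_succ] using h))

end action

/-! ### Comparison of homogeneous and inhomogeneous cochains -/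

lemma dl_ofFn {X E : Type*} [AddCommGroup E] [Module ℝ E] (m : ℕ) (B : List X → E) (p : Fin (m + 1) → X) :
    dl B (List.ofFn p) = ∑ i : Fin (m + 1), ((-1 : ℝ) ^ (i : ℕ)) • B (List.ofFn (p ∘ i.succAbove)) := by
  induction m generalizing B with
  | zero => simp [dl]
  | succ m ih =>
    rw [List.ofFn_succ, dl, ih]
    conv_rhs => rw [Fin.sum_univ_succ]
    simp only [Fin.val_zero, pow_zero, one_smul, Fin.val_succ]
    rw [sub_eq_add_neg, ← Finset.sum_neg_distrib]
    congr 1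
    apply Finset.sum_congr rfl
    intro i _
    rw [pow_succ, mul_neg_one, neg_smul]
    congr 3
    rw [List.ofFn_succ]
    congr 1
    congr 1
    ext j
    simp

section bridge

variable {G : Type*} [Group G] {F : Type*} [NormedAddCommGroup F] [NormedSpace ℝ F]
  (ρ : G →* (F ≃ₗᵢ[ℝ] F))

lemma delta_hat (m : ℕ) (B : List G → (F →L[ℝ] ℝ)) (hB : Equiv' ρ Set.univ B) (g : Fin (m + 1) → G) :
    bddDelta (contragredient ρ) m (fun h => B (List.ofFn (Fin.partialProd h))) g
      = dl B (List.ofFn (Fin.partialProd g)) := by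
  rw [dl_ofFn, Fin.sum_univ_succ, Fin.sum_univ_castSucc]
  simp only [bddDelta, Fin.val_zero, pow_zero, one_smul, Fin.val_succ, Fin.val_castSucc, Fin.val_last]
  rw [add_assoc]
  congr 1
  · rw [← hB _ (Set.mem_univ _), List.map_ofFn]
    congr 2
    ext j
    simp only [Function.comp, Fin.succAbove_zero, Fin.partialProd_succ']
    rfl
  congr 1
  · apply Finset.sum_congr rfl
    intro i _
    rw [← Fin.partialProd_contractNth]
    rfl
  · rw [← Fin.partialProd_contractNth]
    congr 3
    congr 1
    ext j
    simp [Fin.contractNth]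

open Classical in
/-- Homogenization. -/
noncomputable def homog (m : ℕ) (f : (Fin m → G) → (F →L[ℝ] ℝ)) (l : List G) : F →L[ℝ] ℝ :=
  if h : l.length = m + 1 then
    contragredient ρ (l[0]) (f (fun i : Fin m => (l[i.1])⁻¹ * l[i.1 + 1]))
  else 0

lemma homog_equiv (m : ℕ) (f : (Fin m → G) → (F →L[ℝ] ℝ)) : Equiv' ρ Set.univ (homog ρ m f) := by
  intro d _ l
  unfold homog
  by_cases h : l.length = m + 1
  · rw [dif_pos h, dif_pos (by simpa using h), ← con_mul]
    simp [mul_assoc]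
  · rw [dif_neg h, dif_neg (by simpa using h), ← conHom_apply, map_zero]

lemma homog_hat (m : ℕ) (f : (Fin m → G) → (F →L[ℝ] ℝ)) (g : Fin m → G) :
    homog ρ m f (List.ofFn (Fin.partialProd g)) = f g := by
  unfold homog
  rw [dif_pos (by simp)]
  simp only [List.getElem_ofFn]
  have h0 : (Fin.partialProd g) ⟨0, by omega⟩ = 1 := Fin.partialProd_zero g
  rw [h0, con_one]
  congr 1
  ext i
  exact Fin.partialProd_right_inv g i

lemma homog_bd (m : ℕ) (f : (Fin m → G) → (F →L[ℝ] ℝ)) {C : ℝ} (h : ∀ g, ‖f g‖ ≤ C) (l : List G) :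
    ‖homog ρ m f l‖ ≤ C := by
  unfold homog
  have h0 : 0 ≤ C := (norm_nonneg _).trans (h (fun _ => 1))
  split_ifs with hl
  · rw [con_norm]; exact h _
  · simpa using h0

lemma exists_hat (m : ℕ) (l : List G) (hl : l.length = m + 1) :
    ∃ (a : G) (g : Fin m → G), l = (List.ofFn (Fin.partialProd g)).map (a * ·) := by
  have key : ∀ (i : ℕ) (h : i < m + 1), l[i] =
      l[0] * Fin.partialProd (fun i : Fin m => (l[i.1])⁻¹ * l[i.1 + 1]) ⟨i, h⟩ := by
    intro i
    induction i with
    | zero =>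
      intro h
      have := Fin.partialProd_zero (fun i : Fin m => (l[i.1])⁻¹ * l[i.1 + 1])
      have e : (⟨0, h⟩ : Fin (m + 1)) = 0 := rfl
      rw [e, this, mul_one]
    | succ i ih =>
      intro h
      have h3 : i < m := by omega
      have := Fin.partialProd_succ (fun i : Fin m => (l[i.1])⁻¹ * l[i.1 + 1]) ⟨i, h3⟩
      have e : (⟨i + 1, h⟩ : Fin (m + 1)) = (⟨i, h3⟩ : Fin m).succ := rfl
      have e' : (⟨i, by omega⟩ : Fin (m + 1)) = (⟨i, h3⟩ : Fin m).castSucc := rfl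
      have h4 := ih (by omega)
      rw [e'] at h4
      rw [e, this, ← mul_assoc, ← h4]
      simp
  refine ⟨l[0], fun i : Fin m => (l[i.1])⁻¹ * l[i.1 + 1], ?_⟩
  apply List.ext_getElem
  · simp [hl]
  · intro i h1 h2
    simp only [List.getElem_map, List.getElem_ofFn]
    exact key i (by omega)

lemma homog_dl (m : ℕ) (f : (Fin m → G) → (F →L[ℝ] ℝ)) (hf : bddDelta (contragredient ρ) m f = 0)
    (l : List G) : dl (homog ρ m f) l = 0 := by
  by_cases hl : l.length = m + 2
  · obtain ⟨a, g, rfl⟩ := exists_hat (m + 1) l hl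
    rw [dl_map]
    have e : (fun l' => homog ρ m f (l'.map (a * ·))) = fun l' => conHom ρ a (homog ρ m f l') := by
      ext1 l'
      exact homog_equiv ρ m f a (Set.mem_univ _) l'
    rw [e, dl_hom, ← delta_hat ρ m _ (homog_equiv ρ m f)]
    simp only [homog_hat]
    have : bddDelta (contragredient ρ) m (fun h => f h) = 0 := hf
    rw [this]
    simp
  · cases h : l.length with
    | zero =>
      rw [List.length_eq_zero_iff] at h
      subst h; simp [dl]
    | succ r =>
      rw [dl_congr (g := fun _ => 0) r _ l h, dl_zero]
      intro l' hl'
      unfold homog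
      rw [dif_neg (by omega)]

/-- Reduction of the vanishing theorem to a homogeneous statement. -/
lemma hbVanish_of_homog
    (H : ∀ (n : ℕ) (f : List G → (F →L[ℝ] ℝ)) , BdE f → (∀ l, dl f l = 0) → Equiv' ρ Set.univ f →
      ∃ B : List G → (F →L[ℝ] ℝ), BdE B ∧ Equiv' ρ Set.univ B ∧
        ∀ l, l.length = n + 2 → dl B l = f l) : HbVanish (contragredient ρ) := by
  intro n f hfb hf
  obtain ⟨C, hC⟩ := hfb
  obtain ⟨B, ⟨C', hB⟩, hBe, hBd⟩ := H n (homog ρ (n + 1) f) ⟨C, homog_bd ρ _ f hC⟩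
    (homog_dl ρ _ f hf) (homog_equiv ρ _ f)
  refine ⟨fun h => B (List.ofFn (Fin.partialProd h)), ⟨C', fun h => hB _⟩, ?_⟩
  ext1 g
  rw [delta_hat ρ n B hBe, hBd _ (by simp), homog_hat]

end bridge

/-! ### Separability and the weak Radon-Nikodym argument -/

section analysis

open MeasureTheory

variable {F : Type*} [NormedAddCommGroup F] [NormedSpace ℝ F]

lemma separable_of_dual (hsep : TopologicalSpace.SeparableSpace (F →L[ℝ] ℝ)) :
    TopologicalSpace.SeparableSpace F := by
  let e := TopologicalSpace.denseSeq (F →L[ℝ] ℝ)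
  have hv : ∀ j, ∃ v : F, ‖v‖ ≤ 1 ∧ ‖e j‖ / 2 ≤ e j v := by
    intro j
    by_cases h0 : ‖e j‖ = 0
    · exact ⟨0, by simp, by simp [h0]⟩
    · have hpos : 0 < ‖e j‖ := lt_of_le_of_ne (norm_nonneg _) (Ne.symm h0)
      by_contra! hc
      have : ‖e j‖ ≤ ‖e j‖ / 2 := by
        refine ContinuousLinearMap.opNorm_le_of_unit_norm (by positivity) ?_
        intro x hx
        rw [Real.norm_eq_abs, abs_le]
        have h1 := hc x hx.le
        have h2 := hc (-x) (by rw [norm_neg]; exact hx.le)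
        rw [map_neg] at h2
        constructor <;> linarith
      linarith
  choose v hv1 hv2 using hv
  let W : Submodule ℝ F := (Submodule.span ℝ (Set.range v)).topologicalClosure
  have hW : W = ⊤ := by
    by_contra hne
    obtain ⟨x, hx⟩ : ∃ x, x ∉ W := by
      by_contra! h
      exact hne (Submodule.eq_top_iff'.mpr h)
    have hcl : IsClosed (W : Set F) := Submodule.isClosed_topologicalClosure _
    obtain ⟨φ, u, h1, h2⟩ := geometric_hahn_banach_point_closed (W.convex) hcl hx
    have hz : ∀ w ∈ W, φ w = 0 := by
      intro w hw
      by_contra hne0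
      have h3 := h2 (((u - 1) / φ w) • w) (W.smul_mem _ hw)
      rw [map_smul, smul_eq_mul, div_mul_cancel₀ _ hne0] at h3
      linarith
    have hφ : 0 < ‖φ‖ := by
      rw [norm_pos_iff]
      rintro rfl
      have h3 := h2 0 W.zero_mem
      simp at h1 h3
      linarith
    obtain ⟨j, hj⟩ := (TopologicalSpace.denseRange_denseSeq (F →L[ℝ] ℝ)).exists_dist_lt φ
      (show (0 : ℝ) < ‖φ‖ / 4 by positivity)
    have hvW : v j ∈ W := Submodule.le_topologicalClosure _ (Submodule.subset_span ⟨j, rfl⟩)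
    have h4 : |(e j - φ) (v j)| ≤ ‖e j - φ‖ * ‖v j‖ := (e j - φ).le_opNorm (v j)
    rw [ContinuousLinearMap.sub_apply, hz _ hvW, sub_zero] at h4
    have h5 : ‖e j - φ‖ < ‖φ‖ / 4 := by rw [dist_comm, dist_eq_norm] at hj; exact hj
    have h6 : ‖e j - φ‖ * ‖v j‖ ≤ ‖e j - φ‖ := mul_le_of_le_one_right (norm_nonneg _) (hv1 j)
    have h7 := le_abs_self (e j (v j))
    have h8 : ‖φ‖ ≤ ‖e j‖ + ‖e j - φ‖ := by
      have := norm_sub_le (e j) (e j - φ)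
      simpa using this
    have := hv2 j
    linarith
  have hs : TopologicalSpace.IsSeparable ((Submodule.span ℝ (Set.range v)).topologicalClosure : Set F) := by
    rw [Submodule.topologicalClosure_coe]
    exact ((Set.countable_range v).isSeparable.span (R := ℝ)).closure
  have hs' : TopologicalSpace.IsSeparable (Set.univ : Set F) := by
    have : ((W : Submodule ℝ F) : Set F) = Set.univ := by rw [hW]; rfl
    rw [← this]; exact hs
  exact TopologicalSpace.isSeparable_univ_iff.mp hs'

/-- A countable dense additive subgroup. -/
lemma exists_dense_subgroup [TopologicalSpace.SeparableSpace F] :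
    ∃ D : AddSubgroup F, Countable D ∧ Dense (D : Set F) := by
  let u := TopologicalSpace.denseSeq F
  let L : (ℕ →₀ ℤ) →+ F := (Finsupp.linearCombination ℤ u).toAddMonoidHom
  refine ⟨L.range, ?_, ?_⟩
  · exact (Set.countable_range L).to_subtype
  · refine (TopologicalSpace.denseRange_denseSeq F).mono ?_
    rintro _ ⟨n, rfl⟩
    exact ⟨Finsupp.single n 1, by simp [L, u]⟩

lemma exists_extension (D : AddSubgroup F) (hD : Dense (D : Set F)) (C : ℝ) (L : D → ℝ)
    (hadd : ∀ a b, L (a + b) = L a + L b) (hb : ∀ a, |L a| ≤ C * ‖(a : F)‖) :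
    ∃ e : F →L[ℝ] ℝ, ∀ d : D, e d = L d := by
  let L0 : D →+ ℝ := AddMonoidHom.mk' L hadd
  have hc : Continuous L0 := by
    refine AddMonoidHomClass.continuous_of_bound L0 C ?_
    intro x; exact hb x
  let f : D →L[ℤ] ℝ := ⟨L0.toIntLinearMap, hc⟩
  let i : D →L[ℤ] F := ⟨D.subtype.toIntLinearMap, continuous_subtype_val⟩
  have h1 : DenseRange i := by
    have : Set.range i = (D : Set F) := Subtype.range_coe
    rw [DenseRange, this]; exact hD
  have h2 : IsUniformInducing i := isUniformInducing_val _
  let e0 : F →L[ℤ] ℝ := f.extend i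
  let e : F →L[ℝ] ℝ := e0.toLinearMap.toAddMonoidHom.toRealLinearMap e0.continuous
  refine ⟨e, fun d => ?_⟩
  exact ContinuousLinearMap.extend_eq f h1 h2 d

end analysis

section lemmaA

open MeasureTheory

variable {F : Type*} [NormedAddCommGroup F] [NormedSpace ℝ F]
  {Ω : Type*} [MeasurableSpace Ω] (P : Measure Ω) [IsProbabilityMeasure P]

lemma bdd_integrable {φ : Ω → ℝ} (hm : Measurable φ) {C : ℝ} (h : ∀ᵐ ω ∂P, |φ ω| ≤ C) :
    Integrable φ P :=
  Integrable.of_bound hm.aestronglyMeasurable C h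

lemma lemmaA (hsep : TopologicalSpace.SeparableSpace (F →L[ℝ] ℝ))
    (Λ : F → Ω → ℝ) (hm : ∀ v, Measurable (Λ v))
    (hadd : ∀ v w, ∀ᵐ ω ∂P, Λ (v + w) ω = Λ v ω + Λ w ω)
    {C : ℝ} (hC : 0 ≤ C) (hb : ∀ v, ∀ᵐ ω ∂P, |Λ v ω| ≤ C * ‖v‖)
    (h : ℕ → Ω → ℝ) (hhm : ∀ k, Measurable (h k)) {H : ℝ} (hH : ∀ k ω, |h k ω| ≤ H)
    (hlim : ∀ A, MeasurableSet A → Tendsto (fun k => ∫ ω in A, h k ω ∂P) atTop (𝓝 0))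
    {ε : ℝ} (hε : 0 < ε) :
    ∀ᶠ k in atTop, ∀ v, |∫ ω, h k ω * Λ v ω ∂P| ≤ ε * ‖v‖ := by
  have hH0 : 0 ≤ H := by
    have : Nonempty Ω := nonempty_of_isProbabilityMeasure P
    exact (abs_nonneg _).trans (hH 0 (Classical.arbitrary Ω))
  have := separable_of_dual hsep
  obtain ⟨D, hDc, hDd⟩ := exists_dense_subgroup (F := F)
  have hintg : ∀ k v, Integrable (fun ω => h k ω * Λ v ω) P := by
    intro k v
    refine bdd_integrable P ((hhm k).mul (hm v)) (C := H * (C * ‖v‖)) ?_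
    filter_upwards [hb v] with ω hω
    rw [abs_mul]
    exact mul_le_mul (hH k ω) hω (abs_nonneg _) hH0
  have hinth : ∀ k, Integrable (h k) P := fun k =>
    bdd_integrable P (hhm k) (Eventually.of_forall (hH k))
  -- a.e. extension
  have hext : ∀ᵐ ω ∂P, ∃ e : F →L[ℝ] ℝ, ∀ d : D, e d = Λ d ω := by
    have h1 : ∀ᵐ ω ∂P, ∀ a b : D, Λ ((a : F) + b) ω = Λ a ω + Λ b ω :=
      ae_all_iff.mpr fun a => ae_all_iff.mpr fun b => hadd a b
    have h2 : ∀ᵐ ω ∂P, ∀ a : D, |Λ (a : F) ω| ≤ C * ‖(a : F)‖ :=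
      ae_all_iff.mpr fun a => hb a
    filter_upwards [h1, h2] with ω h1 h2
    exact exists_extension D hDd C (fun d => Λ d ω) (fun a b => h1 a b) h2
  let e := TopologicalSpace.denseSeq (F →L[ℝ] ℝ)
  -- constants
  obtain ⟨δ, hδ, hδε⟩ : ∃ δ : ℝ, 0 < δ ∧ H * δ + δ + H * C * δ ≤ ε := by
    refine ⟨ε / (H + 1 + H * C), by positivity, le_of_eq ?_⟩
    have : H + 1 + H * C ≠ 0 := by positivity
    field_simp
  let A : ℕ → Set Ω := fun j => {ω | ∀ d : D, |Λ d ω - e j d| ≤ δ * ‖(d : F)‖}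
  have hA : ∀ j, MeasurableSet (A j) := by
    intro j
    have : A j = ⋂ d : D, {ω | |Λ d ω - e j d| ≤ δ * ‖(d : F)‖} := by
      ext ω; simp [A]
    rw [this]
    refine MeasurableSet.iInter fun d => ?_
    exact measurableSet_le (((hm d).sub_const _).abs) measurable_const
  have hcov : P (⋃ j, A j) = 1 := by
    refine (mem_ae_iff_prob_eq_one (MeasurableSet.iUnion hA)).mp ?_
    filter_upwards [hext] with ω ⟨e', he'⟩
    obtain ⟨j, hj⟩ := (TopologicalSpace.denseRange_denseSeq (F →L[ℝ] ℝ)).exists_dist_lt e' hδ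
    refine Set.mem_iUnion.mpr ⟨j, fun d => ?_⟩
    rw [← he' d]
    have h1 := (e' - e j).le_opNorm d
    rw [Real.norm_eq_abs] at h1
    rw [← ContinuousLinearMap.sub_apply]
    refine h1.trans ?_
    gcongr
    rw [← dist_eq_norm]; exact hj.le
  let B := disjointed A
  have hB : ∀ j, MeasurableSet (B j) := fun j => MeasurableSet.disjointed hA j
  have hBA : ∀ j, B j ⊆ A j := disjointed_subset A
  have hBd : Pairwise (Function.onFun Disjoint B) := disjoint_disjointed A
  have hsum : HasSum (fun j => P.real (B j)) 1 := by
    have h1 : ∑' j, P (B j) = 1 := by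
      rw [← measure_iUnion hBd hB, iUnion_disjointed, hcov]
    have h2 : HasSum (fun j => (P (B j)).toReal) (∑' j, P (B j)).toReal := by
      rw [ENNReal.tsum_toReal_eq (fun j => measure_ne_top _ _)]
      refine ENNReal.hasSum_toReal ?_
      rw [h1]; exact ENNReal.one_ne_top
    rw [h1] at h2
    simpa [Measure.real] using h2
  obtain ⟨J, hJ⟩ : ∃ J : ℕ, 1 - δ < ∑ j ∈ Finset.range J, P.real (B j) := by
    have := hsum.tendsto_sum_nat.eventually_const_lt (show 1 - δ < 1 by linarith)
    exact this.exists
  let R : Set Ω := ⋃ j ∈ Finset.range J, B j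
  have hR : MeasurableSet R := Finset.measurableSet_biUnion _ fun j _ => hB j
  have hRm : P.real R = ∑ j ∈ Finset.range J, P.real (B j) :=
    measureReal_biUnion_finset (fun i _ j _ hij => hBd hij) fun j _ => hB j
  have hRc : P.real Rᶜ ≤ δ := by
    rw [measureReal_compl hR]; simp; linarith
  have hsmall : Tendsto (fun k => ∑ j ∈ Finset.range J, ‖e j‖ * |∫ ω in B j, h k ω ∂P|) atTop (𝓝 0) := by
    have : Tendsto (fun k => ∑ j ∈ Finset.range J, ‖e j‖ * |∫ ω in B j, h k ω ∂P|) atTop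
        (𝓝 (∑ j ∈ Finset.range J, ‖e j‖ * |0|)) :=
      tendsto_finset_sum _ fun j _ => ((hlim (B j) (hB j)).abs).const_mul _
    simpa using this
  filter_upwards [hsmall.eventually_lt_const hδ] with k hk
  have hDk : ∀ d : D, |∫ ω, h k ω * Λ d ω ∂P| ≤ ε * ‖(d : F)‖ := by
    intro d
    have e1 : ∫ ω, h k ω * Λ d ω ∂P
        = (∑ j ∈ Finset.range J, ∫ ω in B j, h k ω * Λ d ω ∂P) + ∫ ω in Rᶜ, h k ω * Λ d ω ∂P := by
      rw [← integral_add_compl hR (hintg k d)]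
      congr 1
      exact integral_biUnion_finset _ (fun j _ => hB j) (fun i _ j _ hij => hBd hij)
        (fun j _ => (hintg k d).integrableOn)
    have e2 : |∫ ω in Rᶜ, h k ω * Λ d ω ∂P| ≤ H * C * δ * ‖(d : F)‖ := by
      have : ‖∫ ω in Rᶜ, h k ω * Λ d ω ∂P‖ ≤ (H * (C * ‖(d : F)‖)) * P.real Rᶜ := by
        refine norm_setIntegral_le_of_norm_le_const_ae' (measure_lt_top _ _) ?_
        filter_upwards [hb d] with ω hω _
        rw [norm_mul]
        exact mul_le_mul (hH k ω) hω (abs_nonneg _) hH0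
      refine this.trans ?_
      calc (H * (C * ‖(d : F)‖)) * P.real Rᶜ ≤ (H * (C * ‖(d : F)‖)) * δ := by gcongr
        _ = _ := by ring
    have e3 : ∀ j, |∫ ω in B j, h k ω * Λ d ω ∂P| ≤
        H * δ * ‖(d : F)‖ * P.real (B j) + ‖(d : F)‖ * (‖e j‖ * |∫ ω in B j, h k ω ∂P|) := by
      intro j
      have q1 : ∫ ω in B j, h k ω * Λ d ω ∂P
          = ∫ ω in B j, h k ω * (Λ d ω - e j d) ∂P + (∫ ω in B j, h k ω ∂P) * e j d := by
        rw [← integral_mul_const, ← integral_add]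
        · congr 1; ext ω; ring
        · have : (fun ω => h k ω * (Λ d ω - e j d)) = fun ω => h k ω * Λ d ω - h k ω * e j d := by
            ext ω; ring
          rw [this]
          exact ((hintg k d).sub ((hinth k).mul_const _)).integrableOn
        · exact ((hinth k).mul_const _).integrableOn
      have q2 : ‖∫ ω in B j, h k ω * (Λ d ω - e j d) ∂P‖ ≤ (H * (δ * ‖(d : F)‖)) * P.real (B j) := by
        refine norm_setIntegral_le_of_norm_le_const (measure_lt_top _ _) ?_
        intro ω hω
        rw [norm_mul]
        exact mul_le_mul (hH k ω) (hBA j hω d) (abs_nonneg _) hH0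
      have q3 : |(∫ ω in B j, h k ω ∂P) * e j d| ≤ ‖(d : F)‖ * (‖e j‖ * |∫ ω in B j, h k ω ∂P|) := by
        rw [abs_mul]
        have := (e j).le_opNorm d
        rw [Real.norm_eq_abs] at this
        calc _ ≤ |∫ ω in B j, h k ω ∂P| * (‖e j‖ * ‖(d : F)‖) := by gcongr
          _ = _ := by ring
      rw [q1]
      refine (abs_add_le _ _).trans (add_le_add ?_ q3)
      rw [Real.norm_eq_abs] at q2
      linarith
    rw [e1]
    refine (abs_add_le _ _).trans ?_
    have e4 : |∑ j ∈ Finset.range J, ∫ ω in B j, h k ω * Λ d ω ∂P| ≤ (H * δ + δ) * ‖(d : F)‖ := by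
      refine (Finset.abs_sum_le_sum_abs _ _).trans ((Finset.sum_le_sum fun j _ => e3 j).trans ?_)
      rw [Finset.sum_add_distrib, ← Finset.mul_sum, ← Finset.mul_sum, ← hRm, add_mul]
      have r1 : P.real R ≤ 1 := measureReal_le_one
      have r2 : 0 ≤ H * δ * ‖(d : F)‖ := by positivity
      have r3 := mul_le_mul_of_nonneg_left r1 r2
      have r4 := mul_le_mul_of_nonneg_left hk.le (norm_nonneg (d : F))
      linarith
    have := mul_le_mul_of_nonneg_right hδε (norm_nonneg (d : F))
    linarith
  -- extend by density
  let I : F →+ ℝ := AddMonoidHom.mk' (fun v => ∫ ω, h k ω * Λ v ω ∂P) (by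
    intro v w
    rw [← integral_add (hintg k v) (hintg k w)]
    refine integral_congr_ae ?_
    filter_upwards [hadd v w] with ω hω
    rw [hω]; ring)
  have hI : Continuous I := by
    refine AddMonoidHomClass.continuous_of_bound I (H * C) ?_
    intro v
    have : ‖∫ ω, h k ω * Λ v ω ∂P‖ ≤ (H * (C * ‖v‖)) * P.real Set.univ := by
      refine norm_integral_le_of_norm_le_const ?_
      filter_upwards [hb v] with ω hω
      rw [norm_mul]
      exact mul_le_mul (hH k ω) hω (abs_nonneg _) hH0
    rw [Real.norm_eq_abs] at this ⊢
    have e0 : I v = ∫ ω, h k ω * Λ v ω ∂P := rfl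
    rw [e0]
    simpa [mul_assoc] using this
  intro v
  have hcl : IsClosed {v : F | |I v| ≤ ε * ‖v‖} :=
    isClosed_le hI.abs (continuous_const.mul continuous_norm)
  exact hcl.closure_subset_iff.mpr (fun d hd => hDk ⟨d, hd⟩) (hDd v)

end lemmaA

section weaklim

open MeasureTheory

variable {Ω : Type*} [MeasurableSpace Ω] (P : Measure Ω) [IsProbabilityMeasure P]

lemma exists_weak_limit (U : Ultrafilter ℕ) (ψ : ℕ → Ω → ℝ) (hm : ∀ m, Measurable (ψ m)) {C : ℝ} (hC : 0 ≤ C)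
    (hb : ∀ m ω, |ψ m ω| ≤ C) :
    ∃ lam : Ω → ℝ, Measurable lam ∧ (∀ᵐ ω ∂P, |lam ω| ≤ C) ∧
      ∀ h : Ω → ℝ, Measurable h → Bd h →
        Tendsto (fun m => ∫ ω, h ω * ψ m ω ∂P) U (𝓝 (∫ ω, h ω * lam ω ∂P)) := by
  have mL : ∀ h : Ω → ℝ, Measurable h → Bd h → MemLp h 2 P := by
    rintro h h1 ⟨K, hK⟩
    exact MemLp.of_bound h1.aestronglyMeasurable K (Eventually.of_forall hK)
  let x : ℕ → Lp ℝ 2 P := fun m => (mL (ψ m) (hm m) ⟨C, hb m⟩).toLp (ψ m)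
  have hx : ∀ m, ‖x m‖ ≤ C := by
    intro m
    have h1 : ∀ᵐ ω ∂P, ‖x m ω‖ ≤ C := by
      filter_upwards [(mL (ψ m) (hm m) ⟨C, hb m⟩).coeFn_toLp] with ω hω
      rw [hω]; exact hb m ω
    have := Lp.norm_le_of_ae_bound hC h1
    have e1 : measureUnivNNReal P = 1 := by simp [measureUnivNNReal]
    simpa [e1] using this
  have hbd : ∀ y : Lp ℝ 2 P, ∀ m, |inner ℝ (x m) y| ≤ C * ‖y‖ := by
    intro y m
    exact (abs_real_inner_le_norm _ _).trans (by gcongr; exact hx m)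
  have ht : ∀ y : Lp ℝ 2 P, Tendsto (fun m => inner ℝ (x m) y) U (𝓝 (ulim U fun m => inner ℝ (x m) y)) :=
    fun y => ulim_tendsto U ⟨_, hbd y⟩
  let ℓ : Lp ℝ 2 P →L[ℝ] ℝ := LinearMap.mkContinuous
    { toFun := fun y => ulim U fun m => inner ℝ (x m) y
      map_add' := fun y z => by
        apply ulim_eq
        simp only [inner_add_right]
        exact (ht y).add (ht z)
      map_smul' := fun c y => by
        apply ulim_eq
        simp only [inner_smul_right]
        exact (ht y).const_mul c } C (fun y => by
          exact le_of_tendsto (ht y).abs (Eventually.of_forall (hbd y)))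
  let z : Lp ℝ 2 P := (InnerProductSpace.toDual ℝ (Lp ℝ 2 P)).symm ℓ
  have hz : ∀ y : Lp ℝ 2 P, Tendsto (fun m => inner ℝ (x m) y) U (𝓝 (inner ℝ z y)) := by
    intro y
    have : inner ℝ z y = ℓ y := InnerProductSpace.toDual_symm_apply
    rw [this]; exact ht y
  have key : ∀ h : Ω → ℝ, Measurable h → Bd h →
        Tendsto (fun m => ∫ ω, h ω * ψ m ω ∂P) U (𝓝 (∫ ω, h ω * z ω ∂P)) := by
    intro h h1 h2
    have h3 := hz ((mL h h1 h2).toLp h)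
    have e1 : ∀ m, inner ℝ (x m) ((mL h h1 h2).toLp h) = ∫ ω, h ω * ψ m ω ∂P := by
      intro m
      rw [L2.inner_def]
      refine integral_congr_ae ?_
      filter_upwards [(mL (ψ m) (hm m) ⟨C, hb m⟩).coeFn_toLp, (mL h h1 h2).coeFn_toLp] with ω h4 h5
      rw [h4, h5]; simp
    have e2 : inner ℝ z ((mL h h1 h2).toLp h) = ∫ ω, h ω * z ω ∂P := by
      rw [L2.inner_def]
      refine integral_congr_ae ?_
      filter_upwards [(mL h h1 h2).coeFn_toLp] with ω h5
      rw [h5]; simp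
    simp only [e1, e2] at h3
    exact h3
  have hzi : Integrable z P := (Lp.memLp z).integrable (by norm_num)
  have hset : ∀ s, MeasurableSet s → |∫ ω in s, z ω ∂P| ≤ C * P.real s := by
    intro s hs
    have h1 : Measurable (s.indicator (fun _ => (1 : ℝ))) := measurable_const.indicator hs
    have h2 := key _ h1 ⟨1, fun ω => by by_cases h : ω ∈ s <;> simp [h]⟩
    have e : ∀ φ : Ω → ℝ, ∫ ω, s.indicator (fun _ => (1 : ℝ)) ω * φ ω ∂P = ∫ ω in s, φ ω ∂P := by
      intro φ
      rw [← integral_indicator hs]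
      congr 1; ext ω; by_cases h : ω ∈ s <;> simp [h]
    simp only [e] at h2
    refine le_of_tendsto h2.abs (Eventually.of_forall fun m => ?_)
    exact norm_setIntegral_le_of_norm_le_const (f := ψ m) (measure_lt_top _ _) (fun ω _ => hb m ω)
  refine ⟨z, (Lp.stronglyMeasurable z).measurable, ?_, key⟩
  have u1 : ∀ᵐ ω ∂P, z ω ≤ C := by
    refine ae_le_of_forall_setIntegral_le hzi (integrable_const C) ?_
    intro s hs _
    have := (abs_le.mp (hset s hs)).2
    rw [setIntegral_const, smul_eq_mul]; linarith
  have u2 : ∀ᵐ ω ∂P, -C ≤ z ω := by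
    refine ae_le_of_forall_setIntegral_le (integrable_const (-C)) hzi ?_
    intro s hs _
    have := (abs_le.mp (hset s hs)).1
    rw [setIntegral_const, smul_eq_mul]; linarith
  filter_upwards [u1, u2] with ω h1 h2
  exact abs_le.mpr ⟨h2, h1⟩

lemma lemmaB {F : Type*} [NormedAddCommGroup F] [NormedSpace ℝ F]
    (hsep : TopologicalSpace.SeparableSpace (F →L[ℝ] ℝ)) (U : Ultrafilter ℕ)
    (φ : ℕ → Ω → (F →L[ℝ] ℝ)) (hm : ∀ m v, Measurable (fun ω => φ m ω v))
    {C : ℝ} (hC : 0 ≤ C) (hb : ∀ m ω, ‖φ m ω‖ ≤ C)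
    (h : ℕ → Ω → ℝ) (hhm : ∀ k, Measurable (h k)) {H : ℝ} (hH : ∀ k ω, |h k ω| ≤ H)
    (hlim : ∀ A, MeasurableSet A → Tendsto (fun k => ∫ ω in A, h k ω ∂P) atTop (𝓝 0))
    {ε : ℝ} (hε : 0 < ε) :
    ∀ᶠ k in atTop, ∀ v, |ulim U (fun m => ∫ ω, h k ω * φ m ω v ∂P)| ≤ ε * ‖v‖ := by
  have hbv : ∀ v m ω, |φ m ω v| ≤ C * ‖v‖ := fun v m ω =>
    ((φ m ω).le_opNorm v).trans (by gcongr; exact hb m ω)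
  have := fun v => exists_weak_limit P U (fun m ω => φ m ω v) (fun m => hm m v)
    (C := C * ‖v‖) (by positivity) (hbv v)
  choose Λ hΛm hΛb hΛ using this
  have hΛi : ∀ v, Integrable (Λ v) P := fun v => bdd_integrable P (hΛm v) (hΛb v)
  have hadd : ∀ v w, ∀ᵐ ω ∂P, Λ (v + w) ω = Λ v ω + Λ w ω := by
    intro v w
    refine Integrable.ae_eq_of_forall_setIntegral_eq _ _ (hΛi (v + w)) ((hΛi v).add (hΛi w)) ?_
    intro s hs _
    have h1 : Measurable (s.indicator (fun _ => (1 : ℝ))) := measurable_const.indicator hs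
    have h2 : Bd (s.indicator (fun _ => (1 : ℝ))) :=
      ⟨1, fun ω => by by_cases h : ω ∈ s <;> simp [h]⟩
    have e : ∀ φ : Ω → ℝ, ∫ ω, s.indicator (fun _ => (1 : ℝ)) ω * φ ω ∂P = ∫ ω in s, φ ω ∂P := by
      intro φ
      rw [← integral_indicator hs]
      congr 1; ext ω; by_cases h : ω ∈ s <;> simp [h]
    have a1 := hΛ (v + w) _ h1 h2
    have a2 := (hΛ v _ h1 h2).add (hΛ w _ h1 h2)
    simp only [e] at a1 a2
    have e3 : ∀ m, ∫ ω in s, φ m ω (v + w) ∂P = ∫ ω in s, φ m ω v ∂P + ∫ ω in s, φ m ω w ∂P := by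
      intro m
      rw [← integral_add]
      · simp only [map_add]
      · exact (bdd_integrable P (hm m v) (Eventually.of_forall (hbv v m))).integrableOn
      · exact (bdd_integrable P (hm m w) (Eventually.of_forall (hbv w m))).integrableOn
    simp only [e3] at a1
    have := tendsto_nhds_unique a1 a2
    rw [this, ← integral_add (hΛi v).integrableOn (hΛi w).integrableOn]
  filter_upwards [lemmaA P hsep Λ hΛm hadd hC hΛb h hhm hH hlim hε] with k hk v
  rw [ulim_eq U (hΛ v (h k) (hhm k) ⟨H, hH k⟩)]
  exact hk v

end weaklim

section orth

open MeasureTheory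

variable {Ω : Type*} [MeasurableSpace Ω] (P : Measure Ω) [IsProbabilityMeasure P]

/-- Density minus one. -/
noncomputable def dens (κ : ℝ) (S : Set Ω) (ω : Ω) : ℝ := κ * S.indicator (fun _ => (1 : ℝ)) ω - 1

lemma dens_meas (κ : ℝ) {S : Set Ω} (hS : MeasurableSet S) : Measurable (dens κ S) :=
  ((measurable_const.indicator hS).const_mul κ).sub_const 1

lemma dens_bound {κ : ℝ} (hκ : 0 ≤ κ) (S : Set Ω) (ω : Ω) : |dens κ S ω| ≤ κ + 1 := by
  unfold dens
  by_cases h : ω ∈ S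
  · simp [h]; rw [abs_le]; constructor <;> linarith
  · simp [h]; exact hκ

lemma dens_integral {κ : ℝ} {S : Set Ω} (hS : MeasurableSet S) {φ : Ω → ℝ} (hφ : Measurable φ) (hb : Bd φ) :
    ∫ ω, dens κ S ω * φ ω ∂P = κ * ∫ ω in S, φ ω ∂P - ∫ ω, φ ω ∂P := by
  obtain ⟨C, hC⟩ := hb
  have hi : Integrable φ P := bdd_integrable P hφ (Eventually.of_forall hC)
  have e : ∀ ω, dens κ S ω * φ ω = κ * S.indicator φ ω - φ ω := by
    intro ω
    unfold dens
    by_cases h : ω ∈ S <;> simp [h] <;> ring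
  simp only [e]
  rw [integral_sub ((hi.indicator hS).const_mul κ) hi, integral_const_mul, integral_indicator hS]

lemma dens_tendsto {κ : ℝ} (hκ : 1 < κ) (T : ℕ → Ω → Ω) (S : ℕ → Set Ω)
    (hS : ∀ k, MeasurableSet (S k))
    (hT : ∀ k (φ : Ω → ℝ), Measurable φ → Bd φ → ∫ ω, φ (T k ω) ∂P = κ * ∫ ω in S k, φ ω ∂P)
    (hTS : ∀ k l, k ≠ l → ∀ ω, T k ω ∈ S l ↔ ω ∈ S l)
    (A : Set Ω) (hA : MeasurableSet A) :
    Tendsto (fun k => ∫ ω in A, dens κ (S k) ω ∂P) atTop (𝓝 0) := by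
  have hκ0 : 0 ≤ κ := by linarith
  have mL : ∀ h : Ω → ℝ, Measurable h → Bd h → MemLp h 2 P := by
    rintro h h1 ⟨K, hK⟩
    exact MemLp.of_bound h1.aestronglyMeasurable K (Eventually.of_forall hK)
  have hdm := fun k => dens_meas κ (hS k)
  have hdb : ∀ k, Bd (dens κ (S k)) := fun k => ⟨_, dens_bound hκ0 (S k)⟩
  have hPS : ∀ k, κ * P.real (S k) = 1 := by
    intro k
    have := hT k (fun _ => 1) measurable_const ⟨1, fun _ => by simp⟩
    simp at this
    exact this.symm
  have hmean : ∀ k, ∫ ω, dens κ (S k) ω ∂P = 0 := by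
    intro k
    have := dens_integral P (κ := κ) (hS k) (φ := fun _ => 1) measurable_const ⟨1, fun _ => by simp⟩
    simp at this
    rw [this, hPS k]; simp
  have horth : ∀ k l, k ≠ l → ∫ ω, dens κ (S k) ω * dens κ (S l) ω ∂P = 0 := by
    intro k l hkl
    rw [dens_integral P (hS k) (hdm l) (hdb l), ← hT k _ (hdm l) (hdb l), sub_eq_zero]
    congr 1; ext ω
    unfold dens
    have := hTS k l hkl ω
    by_cases h : ω ∈ S l
    · simp [h, this.mpr h]
    · simp [h, mt this.mp h]
  have hnorm : ∀ k, ∫ ω, dens κ (S k) ω * dens κ (S k) ω ∂P = κ - 1 := by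
    intro k
    rw [dens_integral P (hS k) (hdm k) (hdb k), hmean k, sub_zero]
    have : ∫ ω in S k, dens κ (S k) ω ∂P = ∫ ω in S k, (κ - 1) ∂P := by
      refine setIntegral_congr_fun (hS k) ?_
      intro ω hω
      simp [dens, hω]
    rw [this, setIntegral_const, smul_eq_mul, ← mul_assoc, hPS k, one_mul]
  let c : ℝ := (Real.sqrt (κ - 1))⁻¹
  have hc : c * c * (κ - 1) = 1 := by
    have h1 : Real.sqrt (κ - 1) * Real.sqrt (κ - 1) = κ - 1 := Real.mul_self_sqrt (by linarith)
    have h2 : Real.sqrt (κ - 1) ≠ 0 := (Real.sqrt_pos.mpr (by linarith)).ne'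
    simp only [c]
    rw [← mul_inv, h1, inv_mul_cancel₀ (by linarith)]
  have hc0 : c ≠ 0 := by rintro h; simp [h] at hc
  let X : ℕ → Lp ℝ 2 P := fun k => c • (mL _ (hdm k) (hdb k)).toLp (dens κ (S k))
  have hin : ∀ (φ ψ : Ω → ℝ) (h1 : MemLp φ 2 P) (h2 : MemLp ψ 2 P),
      inner ℝ (h1.toLp φ) (h2.toLp ψ) = ∫ ω, φ ω * ψ ω ∂P := by
    intro φ ψ h1 h2
    rw [L2.inner_def]
    refine integral_congr_ae ?_
    filter_upwards [h1.coeFn_toLp, h2.coeFn_toLp] with ω h4 h5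
    rw [h4, h5]; simp [mul_comm]
  have hX : Orthonormal ℝ X := by
    rw [orthonormal_iff_ite]
    intro k l
    simp only [X]
    rw [inner_smul_left, inner_smul_right, hin]
    by_cases hkl : k = l
    · subst hkl
      rw [hnorm, if_pos rfl]; simp only [conj_trivial]; linarith [hc]
    · rw [horth k l hkl, if_neg hkl]; simp
  have hAb : Bd (A.indicator (fun _ => (1 : ℝ))) :=
    ⟨1, fun ω => by by_cases h : ω ∈ A <;> simp [h]⟩
  have hAm : Measurable (A.indicator (fun _ => (1 : ℝ))) := measurable_const.indicator hA
  have hs := hX.inner_products_summable ((mL _ hAm hAb).toLp _)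
  have ht := hs.tendsto_atTop_zero
  have e : ∀ k, inner ℝ (X k) ((mL _ hAm hAb).toLp (A.indicator (fun _ => (1 : ℝ))))
      = c * ∫ ω in A, dens κ (S k) ω ∂P := by
    intro k
    simp only [X]
    rw [inner_smul_left, hin, ← integral_indicator hA]
    simp only [conj_trivial]
    congr 2; ext ω
    by_cases h : ω ∈ A <;> simp [h]
  simp only [e] at ht
  have ht2 : Tendsto (fun k => ‖c * ∫ ω in A, dens κ (S k) ω ∂P‖) atTop (𝓝 0) := by
    have := ht.sqrt
    simpa [Real.sqrt_sq_eq_abs] using this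
  have ht3 := (tendsto_zero_iff_norm_tendsto_zero.mpr ht2).const_mul c⁻¹
  simpa [hc0] using ht3

end orth

section prodmeas

open MeasureTheory

variable {X : Type*} [MeasurableSpace X] (P₀ : Measure X) [IsProbabilityMeasure P₀] {N : ℕ}

/-- Modify the `k`-th block. -/
def modify (k : ℕ) (c : Fin N → X → X) (ω : ℕ × Fin N → X) : ℕ × Fin N → X :=
  fun p => (if p.1 = k then c p.2 else id) (ω p)

/-- The constraint set. -/
def blk (k : ℕ) (R : Fin N → Set X) : Set (ℕ × Fin N → X) := {ω | ∀ i, ω (k, i) ∈ R i}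

lemma blk_meas (k : ℕ) {R : Fin N → Set X} (hR : ∀ i, MeasurableSet (R i)) : MeasurableSet (blk k R) := by
  have : blk k R = ⋂ i, (fun ω : ℕ × Fin N → X => ω (k, i)) ⁻¹' (R i) := by
    ext ω; simp [blk]
  rw [this]
  exact MeasurableSet.iInter fun i => measurable_pi_apply _ (hR i)

lemma modify_meas (k : ℕ) {c : Fin N → X → X} (hc : ∀ i, Measurable (c i)) : Measurable (modify (X := X) k c) := by
  refine measurable_pi_lambda _ fun p => ?_
  unfold modify
  by_cases h : p.1 = k
  · simp only [h, if_true]; exact (hc _).comp (measurable_pi_apply _)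
  · simp only [h, if_false]; exact measurable_id.comp (measurable_pi_apply _)

lemma modify_map (k : ℕ) {c : Fin N → X → X} (hc : ∀ i, Measurable (c i)) {R : Fin N → Set X}
    (hR : ∀ i, MeasurableSet (R i)) (κ₀ : ENNReal)
    (hmap : ∀ i, P₀.map (c i) = κ₀ • P₀.restrict (R i)) :
    (Measure.infinitePi (fun _ : ℕ × Fin N => P₀)).map (modify k c)
      = κ₀ ^ N • (Measure.infinitePi (fun _ : ℕ × Fin N => P₀)).restrict (blk k R) := by
  classical
  have hfm : ∀ p : ℕ × Fin N, Measurable (if p.1 = k then c p.2 else (id : X → X)) := by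
    intro p; split_ifs
    · exact hc _
    · exact measurable_id
  have hpr : ∀ p : ℕ × Fin N, IsProbabilityMeasure (P₀.map (if p.1 = k then c p.2 else (id : X → X))) :=
    fun p => Measure.isProbabilityMeasure_map (hfm p).aemeasurable
  have e1 := Measure.infinitePi_map_pi (μ := fun _ : ℕ × Fin N => P₀) (Y := fun _ => X)
    (f := fun p => (if p.1 = k then c p.2 else (id : X → X))) hfm
  have e1' : (Measure.infinitePi (fun _ : ℕ × Fin N => P₀)).map (modify k c) = _ := e1
  rw [e1']
  symm
  refine Measure.eq_infinitePi _ fun s t ht => ?_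
  let K : Finset (ℕ × Fin N) := {k} ×ˢ Finset.univ
  let t2 : ℕ × Fin N → Set X := fun p => if p ∈ s then t p else Set.univ
  let t1 : ℕ × Fin N → Set X := fun p => t2 p ∩ (if p.1 = k then R p.2 else Set.univ)
  have ht2 : ∀ p, MeasurableSet (t2 p) := by
    intro p; simp only [t2]; split_ifs
    · exact ht p
    · exact MeasurableSet.univ
  have ht1 : ∀ p, MeasurableSet (t1 p) := by
    intro p
    refine (ht2 p).inter ?_
    split_ifs
    · exact hR _
    · exact MeasurableSet.univ
  have hset : Set.pi (s : Set (ℕ × Fin N)) t ∩ blk k R = Set.pi ((s ∪ K : Finset _) : Set (ℕ × Fin N)) t1 := by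
    ext ω
    constructor
    · rintro ⟨h1, h2⟩ p hp
      refine ⟨?_, ?_⟩
      · simp only [t2]; split_ifs with h
        · exact h1 p h
        · trivial
      · split_ifs with h
        · obtain ⟨a, b⟩ := p
          simp only at h
          subst h
          exact h2 b
        · trivial
    · intro h
      refine ⟨fun p hp => ?_, fun i => ?_⟩
      · have := (h p (by simp at hp ⊢; exact Or.inl hp)).1
        simpa [t2, Finset.mem_coe.mp hp] using this
      · have := (h (k, i) (by simp [K])).2
        simpa using this
  rw [Measure.smul_apply, Measure.restrict_apply (MeasurableSet.pi s.countable_toSet fun p _ => ht p), hset,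
    Measure.infinitePi_pi _ (fun p _ => ht1 p), smul_eq_mul]
  have e2 : ∏ p ∈ s, (P₀.map (if p.1 = k then c p.2 else (id : X → X))) (t p)
      = ∏ p ∈ s ∪ K, (P₀.map (if p.1 = k then c p.2 else (id : X → X))) (t2 p) := by
    rw [← Finset.prod_subset (Finset.subset_union_left (s₁ := s) (s₂ := K))]
    · refine Finset.prod_congr rfl fun p hp => ?_
      simp [t2, hp]
    · intro p _ hp
      simp only [t2, hp, if_false]
      exact measure_univ
  rw [e2]
  have e3 : ∀ p, (P₀.map (if p.1 = k then c p.2 else (id : X → X))) (t2 p)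
      = (if p.1 = k then κ₀ else 1) * P₀ (t1 p) := by
    intro p
    by_cases h : p.1 = k
    · simp only [h, if_true, t1]
      rw [hmap, Measure.smul_apply, Measure.restrict_apply (ht2 p), smul_eq_mul]
    · simp only [h, if_false, t1, Measure.map_id, Set.inter_univ, one_mul]
  simp only [e3]
  rw [Finset.prod_mul_distrib]
  congr 1
  rw [Finset.prod_ite, Finset.prod_const, Finset.prod_const_one, mul_one]
  congr 1
  have : (s ∪ K).filter (fun p => p.1 = k) = K := by
    ext ⟨a, b⟩
    simp only [K, Finset.mem_filter, Finset.mem_union, Finset.mem_product, Finset.mem_singleton, Finset.mem_univ, and_true]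
    tauto
  rw [this]; simp [K]

lemma modify_integral (k : ℕ) {c : Fin N → X → X} (hc : ∀ i, Measurable (c i)) {R : Fin N → Set X}
    (hR : ∀ i, MeasurableSet (R i)) (κ₀ : ENNReal)
    (hmap : ∀ i, P₀.map (c i) = κ₀ • P₀.restrict (R i)) (φ : (ℕ × Fin N → X) → ℝ) (hφ : Measurable φ) :
    ∫ ω, φ (modify k c ω) ∂(Measure.infinitePi (fun _ : ℕ × Fin N => P₀))
      = (κ₀ ^ N).toReal * ∫ ω in blk k R, φ ω ∂(Measure.infinitePi (fun _ : ℕ × Fin N => P₀)) := by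
  rw [← integral_map (modify_meas k hc).aemeasurable hφ.aestronglyMeasurable,
    modify_map P₀ k hc hR κ₀ hmap, integral_smul_measure, smul_eq_mul]

lemma modify_mem_blk (k l : ℕ) (hkl : k ≠ l) (c : Fin N → X → X) (R : Fin N → Set X) (ω : ℕ × Fin N → X) :
    modify k c ω ∈ blk l R ↔ ω ∈ blk l R := by
  simp [blk, modify, hkl.symm]

lemma perm_integral (σ : Equiv.Perm (Fin N)) (φ : (ℕ × Fin N → X) → ℝ) (hφ : Measurable φ) :
    ∫ ω, φ (fun p => ω (p.1, σ p.2)) ∂(Measure.infinitePi (fun _ : ℕ × Fin N => P₀))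
      = ∫ ω, φ ω ∂(Measure.infinitePi (fun _ : ℕ × Fin N => P₀)) := by
  have hmeas : Measurable (fun ω : ℕ × Fin N → X => fun p : ℕ × Fin N => ω (p.1, σ p.2)) :=
    measurable_pi_lambda _ fun p => measurable_pi_apply _
  have e : (Measure.infinitePi (fun _ : ℕ × Fin N => P₀)).map (fun ω p => ω (p.1, σ p.2))
      = Measure.infinitePi (fun _ : ℕ × Fin N => P₀) := by
    classical
    refine Measure.eq_infinitePi _ fun s t ht => ?_
    rw [Measure.map_apply hmeas (MeasurableSet.pi s.countable_toSet fun p _ => ht p)]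
    let ee : ℕ × Fin N ≃ ℕ × Fin N := Equiv.prodCongr (Equiv.refl ℕ) σ
    have : (fun (ω : ℕ × Fin N → X) (p : ℕ × Fin N) => ω (p.1, σ p.2)) ⁻¹' Set.pi (s : Set (ℕ × Fin N)) t
        = Set.pi ((s.map ee.toEmbedding : Finset _) : Set (ℕ × Fin N)) (fun p => t (ee.symm p)) := by
      ext ω
      simp only [Set.mem_preimage, Set.mem_pi, Finset.coe_map, Set.mem_image]
      constructor
      · rintro h _ ⟨p, hp, rfl⟩
        have := h p hp
        rw [Equiv.coe_toEmbedding, Equiv.symm_apply_apply]; exact this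
      · intro h p hp
        have := h (ee p) ⟨p, hp, rfl⟩
        rw [Equiv.symm_apply_apply] at this; exact this
    rw [this, Measure.infinitePi_pi _ (fun p _ => ht _), Finset.prod_map]
    simp
  conv_rhs => rw [← e]
  rw [integral_map hmeas.aemeasurable hφ.aestronglyMeasurable]

end prodmeas

section words

open MeasureTheory

/-- Words with the discrete measurable structure. -/
def Word (α : Type*) : Type _ := List α

instance {α : Type*} : MeasurableSpace (Word α) := ⊤

instance {α : Type*} : DiscreteMeasurableSpace (Word α) := ⟨fun _ => trivial⟩

instance {α : Type*} [Finite α] : Countable (Word α) :=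
  inferInstanceAs (Countable (List α))

/-- Prepending a letter. -/
def Word.cons {α : Type*} (a : α) (w : Word α) : Word α := List.cons a w

variable (α : Type*) [Fintype α] [Nonempty α]

/-- Weight of a word. -/
noncomputable def wt (w : Word α) : ENNReal := 2⁻¹ * ((2 * (Fintype.card α : ENNReal))⁻¹) ^ (List.length w)

/-- The probability measure on words. -/
noncomputable def wmeas : Measure (Word α) := Measure.sum (fun w => wt α w • Measure.dirac w)

lemma wmeas_singleton (w : Word α) : wmeas α {w} = wt α w := by
  rw [wmeas, Measure.sum_apply _ (measurableSet_singleton w), tsum_eq_single w]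
  · simp
  · intro b hb
    simp [hb]

lemma card_ne_zero_enn : (Fintype.card α : ENNReal) ≠ 0 := by
  simp [Fintype.card_ne_zero]

lemma wt_tsum : ∑' w : Word α, wt α w = 1 := by
  have e := (Equiv.sigmaFiberEquiv (fun w : Word α => List.length w)).tsum_eq (fun w => wt α w)
  rw [← e, ENNReal.tsum_sigma']
  have h1 : ∀ n : ℕ, ∑' w : {w : Word α // List.length w = n},
      wt α ((Equiv.sigmaFiberEquiv (fun w : Word α => List.length w)) ⟨n, w⟩) = 2⁻¹ * (2⁻¹) ^ n := by
    intro n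
    have hw : ∀ w : {w : Word α // List.length w = n},
        wt α ((Equiv.sigmaFiberEquiv (fun w : Word α => List.length w)) ⟨n, w⟩)
          = 2⁻¹ * ((2 * (Fintype.card α : ENNReal))⁻¹) ^ n := by
      rintro ⟨w, rfl⟩; rfl
    simp only [hw]
    let i1 : Fintype {w : Word α // List.length w = n} := inferInstanceAs (Fintype (List.Vector α n))
    rw [tsum_fintype, Finset.sum_const, nsmul_eq_mul]
    have hcard : (Finset.univ : Finset {w : Word α // List.length w = n}).card = Fintype.card α ^ n := card_vector n
    rw [hcard]
    have h0 := card_ne_zero_enn α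
    have ht : (Fintype.card α : ENNReal) ≠ ⊤ := ENNReal.natCast_ne_top _
    push_cast
    rw [ENNReal.mul_inv (Or.inl (by norm_num)) (Or.inl (by norm_num)), mul_pow, mul_left_comm, mul_left_comm ((Fintype.card α : ENNReal) ^ n), ← mul_pow,
      ENNReal.mul_inv_cancel h0 ht, one_pow, mul_one]
  simp only [h1]
  rw [ENNReal.tsum_mul_left, ENNReal.tsum_geometric, ENNReal.one_sub_inv_two, inv_inv]
  exact ENNReal.inv_mul_cancel (by norm_num) (by norm_num)

instance : IsProbabilityMeasure (wmeas α) := by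
  constructor
  rw [wmeas, Measure.sum_apply _ MeasurableSet.univ]
  simp [wt_tsum]

lemma wmeas_map (a : α) : (wmeas α).map (Word.cons a)
    = (2 * (Fintype.card α : ENNReal)) • (wmeas α).restrict (Set.range (Word.cons a)) := by
  refine Measure.ext_of_singleton fun w => ?_
  rw [Measure.map_apply Measurable.of_discrete (measurableSet_singleton w), Measure.smul_apply,
    Measure.restrict_apply (measurableSet_singleton w), smul_eq_mul]
  by_cases h : ∃ w', Word.cons a w' = w
  · obtain ⟨w', rfl⟩ := h
    have e1 : Word.cons a ⁻¹' {Word.cons a w'} = {w'} := by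
      ext x
      constructor
      · intro h
        have h' : List.cons a x = List.cons a w' := h
        exact (List.cons.inj h').2
      · rintro rfl; rfl
    have e2 : ({Word.cons a w'} : Set (Word α)) ∩ Set.range (Word.cons a) = {Word.cons a w'} := by
      apply Set.inter_eq_left.mpr
      rintro _ rfl
      exact ⟨w', rfl⟩
    rw [e1, e2, wmeas_singleton, wmeas_singleton]
    have h0 := card_ne_zero_enn α
    have ht : (Fintype.card α : ENNReal) ≠ ⊤ := ENNReal.natCast_ne_top _
    have hl : List.length (Word.cons a w') = List.length w' + 1 := rfl
    rw [wt, wt, hl, pow_succ]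
    have h2 : (2 * (Fintype.card α : ENNReal)) * (2 * (Fintype.card α : ENNReal))⁻¹ = 1 :=
      ENNReal.mul_inv_cancel (by simp [h0]) (ENNReal.mul_ne_top (by norm_num) ht)
    calc _ = ((2 * (Fintype.card α : ENNReal)) * (2 * (Fintype.card α : ENNReal))⁻¹) *
          (2⁻¹ * (2 * (Fintype.card α : ENNReal))⁻¹ ^ List.length w') := by rw [h2, one_mul]
      _ = _ := by ring
  · have e1 : Word.cons a ⁻¹' {w} = ∅ := by
      ext x; simp; intro hx; exact h ⟨x, hx⟩
    have e2 : ({w} : Set (Word α)) ∩ Set.range (Word.cons a) = ∅ := by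
      ext x; simp; rintro rfl y hy; exact h ⟨y, hy⟩
    rw [e1, e2]; simp

end words

section walk

variable {G : Type*} [Group G] {α : Type*} (g : G) (ι : α → G)

/-- Conjugate by a power. -/
def bcon (j : ℕ) (x : G) : G := g ^ (j : ℤ) * x * g ^ (-(j : ℤ))

lemma bcon_mul (j : ℕ) (x y : G) : bcon g j (x * y) = bcon g j x * bcon g j y := by
  simp [bcon, mul_assoc]

/-- Evaluate a word. -/
def wev (w : Word α) : G := (List.map ι w).prod

lemma wev_cons (a : α) (w : Word α) : wev ι (Word.cons a w) = ι a * wev ι w := by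
  unfold wev Word.cons
  exact List.prod_cons

/-- Partial products. -/
def walk : ℕ → (ℕ → Word α) → G
  | 0, _ => 1
  | m + 1, w => walk m w * bcon g m (wev ι (w m))

variable (G₀ : Subgroup G)

lemma wev_mem (hι : ∀ a, ι a ∈ G₀) (w : Word α) : wev ι w ∈ G₀ := by
  refine Subgroup.list_prod_mem _ ?_
  intro x hx
  obtain ⟨a, _, rfl⟩ := List.mem_map.mp hx
  exact hι a

lemma walk_comm (hι : ∀ a, ι a ∈ G₀)
    (hcomm : ∀ p q : ℤ, p ≠ q → ∀ a ∈ G₀, ∀ b ∈ G₀,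
      (g ^ p * a * g ^ (-p)) * (g ^ q * b * g ^ (-q)) =
      (g ^ q * b * g ^ (-q)) * (g ^ p * a * g ^ (-p)))
    (k m : ℕ) (hmk : m ≤ k) (x : G) (hx : x ∈ G₀) (w : ℕ → Word α) :
    bcon g k x * walk g ι m w = walk g ι m w * bcon g k x := by
  induction m with
  | zero => simp [walk]
  | succ m ih =>
    have h1 := hcomm k m (by exact_mod_cast (show k ≠ m by omega)) x hx _ (wev_mem ι G₀ hι (w m))
    have h1' : bcon g k x * bcon g m (wev ι (w m)) = bcon g m (wev ι (w m)) * bcon g k x := h1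
    simp only [walk]
    rw [← mul_assoc, ih (by omega), mul_assoc, h1', mul_assoc]

lemma walk_congr (m : ℕ) (w w' : ℕ → Word α) (h : ∀ j < m, w j = w' j) : walk g ι m w = walk g ι m w' := by
  induction m with
  | zero => rfl
  | succ m ih => simp only [walk]; rw [ih (fun j hj => h j (by omega)), h m (by omega)]

lemma walk_modify (hι : ∀ a, ι a ∈ G₀)
    (hcomm : ∀ p q : ℤ, p ≠ q → ∀ a ∈ G₀, ∀ b ∈ G₀,
      (g ^ p * a * g ^ (-p)) * (g ^ q * b * g ^ (-q)) =
      (g ^ q * b * g ^ (-q)) * (g ^ p * a * g ^ (-p)))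
    (k m : ℕ) (hkm : k < m) (a : α) (w w' : ℕ → Word α) (h1 : w' k = Word.cons a (w k))
    (h2 : ∀ j, j ≠ k → w' j = w j) :
    walk g ι m w' = bcon g k (ι a) * walk g ι m w := by
  induction m with
  | zero => omega
  | succ m ih =>
    simp only [walk]
    by_cases h : k = m
    · subst h
      rw [walk_congr g ι k w' w (fun j hj => h2 j (by omega)), h1, wev_cons, bcon_mul, ← mul_assoc, ← mul_assoc,
        walk_comm g ι G₀ hι hcomm k k le_rfl _ (hι a)]
    · rw [ih (by omega), h2 m (Ne.symm h), mul_assoc]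

end walk

section propK

open MeasureTheory

/-- The mean obtained from a random variable. -/
noncomputable def Mean.int {Ω I : Type*} [MeasurableSpace Ω] (P : Measure Ω) [IsProbabilityMeasure P] (Z : Ω → I)
    (hZ : ∀ φ : I → ℝ, Measurable (fun ω => φ (Z ω))) : Mean I where
  m φ := ∫ ω, φ (Z ω) ∂P
  add' φ ψ h1 h2 := by
    obtain ⟨C, hC⟩ := h1; obtain ⟨C', hC'⟩ := h2
    exact integral_add (bdd_integrable P (hZ φ) (Eventually.of_forall fun ω => hC _))
      (bdd_integrable P (hZ ψ) (Eventually.of_forall fun ω => hC' _))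
  smul' c φ _ := integral_const_mul _ _
  bound' C φ h := by
    have : ‖∫ ω, φ (Z ω) ∂P‖ ≤ C * P.real Set.univ :=
      norm_integral_le_of_norm_le_const (Eventually.of_forall fun ω => h _)
    simpa using this
  const' c := by simp

variable {G : Type*} [Group G] (G₀ : Subgroup G) (g : G)

/-- The random tuple. -/
def rtup {α : Type*} (ι : α → G) (N m : ℕ) (ω : ℕ × Fin N → Word α) : Fin N → G :=
  fun i => walk g ι m (fun j => ω (j, i))

lemma rtup_meas {α : Type*} [Fintype α] (ι : α → G) (N m : ℕ) {B : Type*} [MeasurableSpace B] [Inhabited α]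
    (φ : (Fin N → G) → B) : Measurable (fun ω => φ (rtup g ι N m ω)) := by
  let r : (ℕ × Fin N → Word α) → (Fin m × Fin N → Word α) := fun ω p => ω (p.1, p.2)
  have hr : Measurable r := measurable_pi_lambda _ fun p => measurable_pi_apply _
  let ψ : (Fin m × Fin N → Word α) → B := fun u =>
    φ (fun i => walk g ι m (fun j => if h : j < m then u (⟨j, h⟩, i) else ([] : List α)))
  have hψ : Measurable ψ := Measurable.of_discrete
  have : (fun ω => φ (rtup g ι N m ω)) = ψ ∘ r := by
    ext ω
    simp only [Function.comp, ψ]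
    congr 1
    funext i
    refine walk_congr g ι m _ _ fun j hj => ?_
    simp [hj, r]
  rw [this]
  exact hψ.comp hr

lemma propK
    (hcomm : ∀ p q : ℤ, p ≠ q → ∀ a ∈ G₀, ∀ b ∈ G₀,
      (g ^ p * a * g ^ (-p)) * (g ^ q * b * g ^ (-q)) =
      (g ^ q * b * g ^ (-q)) * (g ^ p * a * g ^ (-p)))
    {F : Type*} [NormedAddCommGroup F] [NormedSpace ℝ F]
    (hsep : TopologicalSpace.SeparableSpace (F →L[ℝ] ℝ))
    {α : Type*} [Fintype α] [Inhabited α] (ι : α → G) (hι : ∀ a, ι a ∈ G₀) (N : ℕ) (hN : N ≠ 0) :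
    ∃ M : Mean (Fin N → G),
      (∀ (σ : Equiv.Perm (Fin N)) φ, Bd φ → M.m (fun y => φ (y ∘ σ)) = M.m φ) ∧
      ∀ f : (Fin N → G) → (F →L[ℝ] ℝ), BdE f → ∀ ε : ℝ, 0 < ε → ∀ γ : Fin N → α, ∀ᶠ k : ℕ in atTop,
        ‖M.wint (fun y => f (fun i => bcon g k (ι (γ i)) * y i)) - M.wint f‖ ≤ ε := by
  let P := Measure.infinitePi (fun _ : ℕ × Fin N => wmeas α)
  let M : Mean (Fin N → G) := Mean.lim (hyperfilter ℕ)
    (fun m => Mean.int P (rtup g ι N m) (fun φ => rtup_meas g ι N m φ))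
  refine ⟨M, ?_, ?_⟩
  · intro σ φ hφ
    have : ∀ m : ℕ, (Mean.int P (rtup g ι N m) (fun φ => rtup_meas g ι N m φ)).m (fun y => φ (y ∘ σ))
        = (Mean.int P (rtup g ι N m) (fun φ => rtup_meas g ι N m φ)).m φ := by
      intro m
      exact perm_integral (wmeas α) σ (fun ω => φ (rtup g ι N m ω)) (rtup_meas g ι N m φ)
    simp only [M, Mean.lim, this]
  · intro f hf ε hε γ
    obtain ⟨C, hC⟩ := id hf
    have hC0 : 0 ≤ C := (norm_nonneg _).trans (hC (fun _ => 1))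
    let c : Fin N → Word α → Word α := fun i => Word.cons (γ i)
    let R : Fin N → Set (Word α) := fun i => Set.range (Word.cons (γ i))
    let κ₀ : ENNReal := 2 * (Fintype.card α : ENNReal)
    let κ : ℝ := (κ₀ ^ N).toReal
    have hκ : 1 < κ := by
      have h1 : (1 : ℝ) ≤ Fintype.card α := by exact_mod_cast Fintype.card_pos
      have : κ = (2 * (Fintype.card α : ℝ)) ^ N := by simp [κ, κ₀]
      rw [this]
      exact one_lt_pow₀ (by linarith) hN
    have hcm : ∀ i, Measurable (c i) := fun i => Measurable.of_discrete
    have hRm : ∀ i, MeasurableSet (R i) := fun i => MeasurableSet.of_discrete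
    have hmap : ∀ i, (wmeas α).map (c i) = κ₀ • (wmeas α).restrict (R i) := fun i => wmeas_map α (γ i)
    have hSm : ∀ k, MeasurableSet (blk k R) := fun k => blk_meas k hRm
    have hT : ∀ k (φ : (ℕ × Fin N → Word α) → ℝ), Measurable φ → Bd φ →
        ∫ ω, φ (modify k c ω) ∂P = κ * ∫ ω in blk k R, φ ω ∂P :=
      fun k φ hφ _ => modify_integral (wmeas α) k hcm hRm κ₀ hmap φ hφ
    have hlim := dens_tendsto P hκ (fun k => modify k c) (fun k => blk k R) hSm hT
      (fun k l hkl ω => modify_mem_blk k l hkl c R ω)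
    have key := lemmaB P hsep (hyperfilter ℕ) (fun m ω => f (rtup g ι N m ω))
      (fun m v => rtup_meas g ι N m (fun y => f y v)) hC0 (fun m ω => hC _)
      (fun k => dens κ (blk k R)) (fun k => dens_meas κ (hSm k))
      (fun k ω => dens_bound (by linarith) (blk k R) ω) hlim hε
    filter_upwards [key] with k hk
    refine ContinuousLinearMap.opNorm_le_bound _ hε.le fun v => ?_
    refine le_trans (le_of_eq ?_) (hk v)
    rw [Real.norm_eq_abs]
    congr 1
    symm
    have hf' : BdE (fun y : Fin N → G => f (fun i => bcon g k (ι (γ i)) * y i)) := ⟨C, fun y => hC _⟩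
    rw [ContinuousLinearMap.sub_apply, M.wint_apply hf', M.wint_apply hf]
    have t1 := Mean.lim_tendsto (hyperfilter ℕ)
      (fun m => Mean.int P (rtup g ι N m) (fun φ => rtup_meas g ι N m φ)) (hf'.apply v)
    have t2 := Mean.lim_tendsto (hyperfilter ℕ)
      (fun m => Mean.int P (rtup g ι N m) (fun φ => rtup_meas g ι N m φ)) (hf.apply v)
    refine ulim_eq _ ((t1.sub t2).congr' ?_)
    have hev : ∀ᶠ m in (hyperfilter ℕ : Filter ℕ), k < m :=
      Nat.hyperfilter_le_atTop (eventually_gt_atTop k)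
    filter_upwards [hev] with m hm
    have hmeas := rtup_meas g ι N m (α := α) (fun y => f y v)
    have hbd : Bd (fun ω : ℕ × Fin N → Word α => f (rtup g ι N m ω) v) :=
      (hf.apply v).imp fun _ h ω => h _
    rw [dens_integral P (hSm k) hmeas hbd, ← hT k _ hmeas hbd]
    simp only [Mean.int]
    congr 2
    ext ω
    congr 2
    funext i
    symm
    refine walk_modify g ι G₀ hι hcomm k m hm (γ i) _ _ ?_ ?_
    · simp [modify, c]
    · intro j hj; simp [modify, hj]

end propK

section final

variable {G : Type*} [Group G] (G₀ : Subgroup G) (g : G)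
  {F : Type*} [NormedAddCommGroup F] [NormedSpace ℝ F] (ρ : G →* (F ≃ₗᵢ[ℝ] F))

lemma Mean.wint_map {I J : Type*} (M : Mean I) (h : I → J) {φ : J → (F →L[ℝ] ℝ)} (hφ : BdE φ) :
    (M.map h).wint φ = M.wint (fun i => φ (h i)) := by
  ext v
  rw [Mean.wint_apply _ hφ, Mean.wint_apply _ (hφ.imp fun _ h' i => h' _)]
  rfl

lemma approx_mean
    (hcomm : ∀ p q : ℤ, p ≠ q → ∀ a ∈ G₀, ∀ b ∈ G₀,
      (g ^ p * a * g ^ (-p)) * (g ^ q * b * g ^ (-q)) =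
      (g ^ q * b * g ^ (-q)) * (g ^ p * a * g ^ (-p)))
    (hsep : TopologicalSpace.SeparableSpace (F →L[ℝ] ℝ)) (S : Finset G)
    (hS : ∃ t : G, ∀ x ∈ S, t⁻¹ * x * t ∈ G₀) (N : ℕ) (hN : N ≠ 0)
    (f : List G → (F →L[ℝ] ℝ)) (hfb : BdE f) (heq : Equiv' ρ Set.univ f) (ε : ℝ) (hε : 0 < ε) :
    ∃ M : Mean (Fin N → G),
      (∀ (σ : Equiv.Perm (Fin N)) φ, Bd φ → M.m (fun y => φ (y ∘ σ)) = M.m φ) ∧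
      ∀ γ : Fin N → G, (∀ i, γ i ∈ S) →
        ‖M.wint (fun y => f (List.ofFn (fun i => γ i * y i))) - M.wint (fun y => f (List.ofFn y))‖ ≤ ε := by
  obtain ⟨t, ht⟩ := hS
  let ι : Option {x // x ∈ S} → G := fun o => o.elim 1 (fun x => t⁻¹ * x * t)
  have hι : ∀ a, ι a ∈ G₀ := by
    rintro (_ | ⟨x, hx⟩)
    · exact G₀.one_mem
    · exact ht x hx
  obtain ⟨M, hM1, hM2⟩ := propK G₀ g hcomm hsep ι hι N hN
  have hb : BdE (fun y : Fin N → G => f (List.ofFn y)) := hfb.imp fun _ h y => h _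
  have hev := eventually_all.mpr fun γ : Fin N → Option {x // x ∈ S} => hM2 _ hb ε hε γ
  obtain ⟨k, hk⟩ := hev.exists
  let s : G := t * g ^ (-(k : ℤ))
  refine ⟨M.map (fun y i => s * y i), ?_, ?_⟩
  · intro σ φ hφ
    exact hM1 σ (fun y => φ (fun i => s * y i)) (hφ.imp fun _ h y => h _)
  · intro γ hγ
    have hk' := hk (fun i => some ⟨γ i, hγ i⟩)
    have hb' : BdE (fun y : Fin N → G => f (List.ofFn (fun i => γ i * y i))) := hfb.imp fun _ h y => h _
    rw [Mean.wint_map _ _ hb', Mean.wint_map _ _ hb]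
    have e0 : ∀ z : Fin N → G, f (List.ofFn (fun i => s * z i)) = contragredient ρ s (f (List.ofFn z)) := by
      intro z
      rw [← heq s (Set.mem_univ _), List.map_ofFn]; rfl
    have e1 : ∀ y : Fin N → G, f (List.ofFn (fun i => γ i * (s * y i)))
        = contragredient ρ s (f (List.ofFn (fun i => bcon g k (ι (some ⟨γ i, hγ i⟩)) * y i))) := by
      intro y
      rw [← e0]
      congr 2
      funext i
      simp only [s, bcon, ι, Option.elim]
      group
    simp only [e0, e1]
    have hb'' : BdE (fun y : Fin N → G => f (List.ofFn (fun i => bcon g k (ι (some ⟨γ i, hγ i⟩)) * y i))) :=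
      hfb.imp fun _ h y => h _
    rw [con_wint ρ M hb'' s, con_wint ρ M hb s]
    rw [← conHom_apply, ← conHom_apply, ← map_sub, conHom_apply, con_norm]
    exact hk'

lemma exact_mean
    (hcomm : ∀ p q : ℤ, p ≠ q → ∀ a ∈ G₀, ∀ b ∈ G₀,
      (g ^ p * a * g ^ (-p)) * (g ^ q * b * g ^ (-q)) =
      (g ^ q * b * g ^ (-q)) * (g ^ p * a * g ^ (-p)))
    (hsep : TopologicalSpace.SeparableSpace (F →L[ℝ] ℝ)) (D : Subgroup G)
    (hconj : ∀ S : Finset G, (↑S : Set G) ⊆ (D : Set G) → ∃ t : G, ∀ x ∈ S, t⁻¹ * x * t ∈ G₀)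
    (N : ℕ) (hN : N ≠ 0)
    (f : List G → (F →L[ℝ] ℝ)) (hfb : BdE f) (heq : Equiv' ρ Set.univ f) :
    ∃ M : Mean (Fin N → G),
      (∀ (σ : Equiv.Perm (Fin N)) φ, Bd φ → M.m (fun y => φ (y ∘ σ)) = M.m φ) ∧
      ∀ γ : Fin N → G, (∀ i, γ i ∈ D) →
        M.wint (fun y => f (List.ofFn (fun i => γ i * y i))) = M.wint (fun y => f (List.ofFn y)) := by
  classical
  have h1 : ∀ j : Finset D × ℕ, ∃ M : Mean (Fin N → G),
      (∀ (σ : Equiv.Perm (Fin N)) φ, Bd φ → M.m (fun y => φ (y ∘ σ)) = M.m φ) ∧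
      ∀ γ : Fin N → G, (∀ i, γ i ∈ j.1.map (Function.Embedding.subtype _)) →
        ‖M.wint (fun y => f (List.ofFn (fun i => γ i * y i))) - M.wint (fun y => f (List.ofFn y))‖
          ≤ 1 / ((j.2 : ℝ) + 1) := by
    intro j
    refine approx_mean G₀ g ρ hcomm hsep _ (hconj _ ?_) N hN f hfb heq _ (by positivity)
    intro x hx
    simp at hx
    obtain ⟨hx, _⟩ := hx
    exact hx
  choose M hM1 hM2 using h1
  let U : Ultrafilter (Finset D × ℕ) := Ultrafilter.of atTop
  have hU : (U : Filter (Finset D × ℕ)) ≤ atTop := Ultrafilter.of_le _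
  refine ⟨Mean.lim U M, ?_, ?_⟩
  · intro σ φ hφ
    simp only [Mean.lim, fun j => hM1 j σ φ hφ]
  · intro γ hγ
    have hb : BdE (fun y : Fin N → G => f (List.ofFn y)) := hfb.imp fun _ h y => h _
    have hb' : BdE (fun y : Fin N → G => f (List.ofFn (fun i => γ i * y i))) := hfb.imp fun _ h y => h _
    ext v
    rw [Mean.wint_apply _ hb, Mean.wint_apply _ hb', ← sub_eq_zero]
    refine tendsto_nhds_unique ((Mean.lim_tendsto U M (hb'.apply v)).sub (Mean.lim_tendsto U M (hb.apply v))) ?_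
    have hz : Tendsto (fun j : Finset D × ℕ => 1 / ((j.2 : ℝ) + 1) * ‖v‖) U (𝓝 0) := by
      have h2 : Tendsto (fun j : Finset D × ℕ => j.2) atTop atTop := by
        rw [← prod_atTop_atTop_eq]; exact tendsto_snd
      have h3 := ((tendsto_one_div_add_atTop_nhds_zero_nat (𝕜 := ℝ)).comp (h2.mono_left hU)).mul_const ‖v‖
      simpa using h3
    refine squeeze_zero_norm' ?_ hz
    let S : Finset D := Finset.univ.image (fun i => (⟨γ i, hγ i⟩ : D))
    have hev : ∀ᶠ j in (U : Filter (Finset D × ℕ)), (S, 0) ≤ j := hU (eventually_ge_atTop _)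
    filter_upwards [hev] with j hj
    have h4 := hM2 j γ (by
      intro i
      have : (⟨γ i, hγ i⟩ : D) ∈ j.1 := hj.1 (Finset.mem_image.mpr ⟨i, Finset.mem_univ _, rfl⟩)
      simpa using ⟨hγ i, this⟩)
    rw [← Mean.wint_apply _ hb, ← Mean.wint_apply _ hb', ← ContinuousLinearMap.sub_apply]
    refine (ContinuousLinearMap.le_opNorm _ v).trans ?_
    gcongr

lemma main
    (hcomm : ∀ p q : ℤ, p ≠ q → ∀ a ∈ G₀, ∀ b ∈ G₀,
      (g ^ p * a * g ^ (-p)) * (g ^ q * b * g ^ (-q)) =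
      (g ^ q * b * g ^ (-q)) * (g ^ p * a * g ^ (-p)))
    (hsep : TopologicalSpace.SeparableSpace (F →L[ℝ] ℝ)) (k : ℕ)
    (hconj : ∀ S : Finset G, (↑S : Set G) ⊆ (derivedSeries G k : Set G) →
      ∃ t : G, ∀ x ∈ S, t⁻¹ * x * t ∈ G₀) : HbVanish (contragredient ρ) := by
  refine hbVanish_of_homog ρ ?_
  intro n f hfb hd heq
  obtain ⟨M, hM1, hM2⟩ := exact_mean G₀ g ρ hcomm hsep (derivedSeries G k) hconj (n + 2) (by omega) f hfb heq
  obtain ⟨B, ⟨C, hC⟩, hB2, hB3⟩ := exists_primitive ρ (derivedSeries G k) (n + 2) (by omega) f hfb hd heq M hM1 hM2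
  obtain ⟨B', ⟨h1, h2⟩, h3⟩ := adm_solvable ρ heq (N := n + 2) (C := C) ((norm_nonneg _).trans (hC [])) k
    ⟨B, ⟨hC, hB3⟩, hB2⟩
  exact ⟨B', ⟨C, h1⟩, h3, h2⟩

end final

end HbV

/-- Let `G₀ ≤ G` be a subgroup such that every finite subset of the
`k`-th derived subgroup `G^(k)` is contained in some `G`-conjugate of `G₀`, and such
that `G` contains an element `g` whose conjugates of `G₀` by distinct powers commute.
Then `Hb^n(G,E) = 0` for all `n ≥ 1` and all separable dual Banach `G`-modules
`E = F*`. -/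
theorem vanishing_of_selfSimilar_derived.{u}
    {G : Type*} [Group G] (k : ℕ) (G₀ : Subgroup G)
    (hconj : ∀ S : Finset G, (↑S : Set G) ⊆ (derivedSeries G k : Set G) →
      ∃ t : G, ∀ x ∈ S, t⁻¹ * x * t ∈ G₀)
    (g : G)
    (hcomm : ∀ p q : ℤ, p ≠ q → ∀ a ∈ G₀, ∀ b ∈ G₀,
      (g ^ p * a * g ^ (-p)) * (g ^ q * b * g ^ (-q)) =
      (g ^ q * b * g ^ (-q)) * (g ^ p * a * g ^ (-p)))
    (F : Type u) [NormedAddCommGroup F] [NormedSpace ℝ F] [CompleteSpace F]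
    (ρ : G →* (F ≃ₗᵢ[ℝ] F))
    (hsep : TopologicalSpace.SeparableSpace (F →L[ℝ] ℝ)) :
    HbVanish (contragredient ρ) := by
  exact HbV.main G₀ g ρ hcomm hsep k hconj
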